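/- arXiv:2210.07872 — 2 statements merged into one kernel-verified Lean document; each statement's English description precedes it below -/
import Mathlib

section
/- For every integer m ≥ 1 and n ≥ 2, the m-th moment of the Kesten-McKay measure with density σ(x) = n√(δ² - x²)/(2π(1-x²)) supported on [-δ, δ] where δ = 2√(n-1)/n, equals 0 for odd m and equals (1/n^m) Σ_{j=1}^{m/2} C(m-j, m/2) (j/(m-j)) n^j (n-1)^{m/2-j} for even m. -/
open Real Finset intervalIntegral

def kmE (K i : ℕ) : ℝ := (Nat.choose (2*K-i) K : ℝ) - Nat.choose (2*K-i) (K+1)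

noncomputable def kmT (q : ℝ) (K : ℕ) : ℝ := ∑ i ∈ range (K+1), kmE K i * (q+1)^(i+1) * q^(K-i)

lemma kmE_rec (K i : ℕ) (h : i ≤ K) : kmE (K+1) (i+1) = kmE K i + kmE (K+1) (i+2) := by
  unfold kmE
  have h1 : 2*(K+1)-(i+1) = (2*K-i)+1 := by omega
  have h2 : 2*(K+1)-(i+2) = 2*K-i := by omega
  rw [h1, h2, Nat.choose_succ_succ, Nat.choose_succ_succ]
  push_cast; ring

lemma kmE_zero_one (K : ℕ) : kmE (K+1) 0 = kmE (K+1) 1 := by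
  unfold kmE
  have h1 : 2*(K+1)-0 = (2*K+1)+1 := by omega
  have h2 : 2*(K+1)-1 = 2*K+1 := by omega
  rw [h1, h2, Nat.choose_succ_succ' (2*K+1) K, Nat.choose_succ_succ' (2*K+1) (K+1)]
  have := Nat.choose_symm_half K
  rw [this]
  push_cast
  ring

lemma kmE_top (K : ℕ) : kmE (K+1) (K+2) = 0 := by
  unfold kmE
  rw [Nat.choose_eq_zero_of_lt (by omega), Nat.choose_eq_zero_of_lt (by omega)]; simp

lemma kmE_zero (K : ℕ) : kmE K 0 = (Nat.centralBinom K : ℝ) / (K+1) := by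
  unfold kmE
  have h := Nat.choose_succ_right_eq (2*K) K
  rw [show 2*K-K=K by omega] at h
  have h' : (Nat.choose (2*K) (K+1) : ℝ) * (K+1) = Nat.choose (2*K) K * K := by exact_mod_cast h
  rw [Nat.centralBinom, eq_div_iff (by positivity)]
  simp only [Nat.sub_zero]
  linear_combination -h'

lemma kmT_rec (q : ℝ) (hq : 0 < q) (K : ℕ) :
    kmT q (K+1) = (q+1)^2 * kmT q K - (q+1) * kmE (K+1) 0 * q^(K+2) := by
  have e1 : kmT q (K+1) = (∑ i ∈ range (K+1), kmE (K+1) (i+1) * (q+1)^(i+2) * q^(K-i))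
      + kmE (K+1) 0 * (q+1) * q^(K+1) := by
    unfold kmT
    rw [Finset.sum_range_succ']
    simp
  have e2 : ∑ i ∈ range (K+1), kmE (K+1) (i+1) * (q+1)^(i+2) * q^(K-i)
      = (q+1) * kmT q K + ∑ i ∈ range (K+1), kmE (K+1) (i+2) * (q+1)^(i+2) * q^(K-i) := by
    unfold kmT
    rw [Finset.mul_sum, ← Finset.sum_add_distrib]
    apply Finset.sum_congr rfl
    intro i hi
    rw [kmE_rec K i (by simp at hi; omega)]
    ring
  have e3 : (q+1) * ∑ i ∈ range (K+1), kmE (K+1) (i+2) * (q+1)^(i+2) * q^(K-i)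
     = q * (∑ i ∈ range (K+1), kmE (K+1) (i+1) * (q+1)^(i+2) * q^(K-i))
       - kmE (K+1) 1 * (q+1)^2 * q^(K+1) := by
    rw [Finset.sum_range_succ, Finset.sum_range_succ' _ K, kmE_top]
    simp only [mul_add, Finset.mul_sum]
    have : ∀ i ∈ range K, (q+1) * (kmE (K+1) (i+2) * (q+1)^(i+2) * q^(K-i)) =
       q * (kmE (K+1) (i+1+1) * (q+1)^(i+1+2) * q^(K-(i+1))) := by
      intro i hi
      simp at hi
      rw [show K - i = (K-(i+1))+1 by omega]
      ring
    rw [Finset.sum_congr rfl this]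
    simp
    ring
  rw [kmE_zero_one] at *
  generalize (∑ i ∈ range (K+1), kmE (K+1) (i+1) * (q+1)^(i+2) * q^(K-i)) = X at *
  generalize (∑ i ∈ range (K+1), kmE (K+1) (i+2) * (q+1)^(i+2) * q^(K-i)) = Y at *
  rw [e1]
  linear_combination (q+1) * e2 + e3

lemma kmT_eq (n K : ℕ) (hn : 2 ≤ n) :
    ∑ j ∈ Finset.Icc 1 (K+1),
            (Nat.choose (2*(K+1) - j) (K+1) : ℝ) * ((j : ℝ) / (((2*(K+1) : ℕ) : ℝ) - j))
              * (n : ℝ) ^ j * ((n : ℝ) - 1) ^ (K+1 - j) = kmT ((n:ℝ)-1) K := by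
  unfold kmT
  rw [← Finset.Ico_add_one_right_eq_Icc, Finset.sum_Ico_eq_sum_range]
  apply Finset.sum_congr (by simp)
  intro i hi
  simp at hi
  rw [show K+1-(1+i) = K-i by omega, show 1+i = i+1 by omega, sub_add_cancel]
  congr 2
  unfold kmE
  obtain ⟨d, rfl⟩ : ∃ d, K = i + d := ⟨K-i, by omega⟩
  rw [show 2*(i+d+1)-(i+1) = (i+2*d)+1 by omega, show 2*(i+d)-i = i+2*d by omega]
  have h1 := Nat.add_one_mul_choose_eq (i+2*d) (i+d)
  have h2 := Nat.choose_succ_right_eq (i+2*d) (i+d)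
  rw [show i+2*d-(i+d) = d by omega] at h2
  have h1' : ((i:ℝ)+2*d+1) * (i+2*d).choose (i+d) = (i+2*d+1).choose (i+d+1) * (i+d+1) := by
    exact_mod_cast h1
  have h2' : ((i+2*d).choose (i+d+1) : ℝ) * (i+d+1) = (i+2*d).choose (i+d) * d := by
    exact_mod_cast h2
  have p1 : (i:ℝ)+2*d+1 ≠ 0 := by positivity
  have p2 : (i:ℝ)+d+1 ≠ 0 := by positivity
  have h3 : (2*((i:ℝ)+d+1) - (i+1)) = i+2*d+1 := by ring
  push_cast
  rw [h3]
  field_simp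
  apply mul_right_cancel₀ p2
  linear_combination (-(i:ℝ)-1) * h1' + (i+2*d+1)*h2'

lemma km_odd (m : ℕ) (hm : Odd m) (g : ℝ → ℝ) (hg : ∀ x, g (-x) = g x) (d : ℝ) :
    ∫ x in (-d)..d, x^m * g x = 0 := by
  have h := intervalIntegral.integral_comp_neg (a := -d) (b := d) (fun x => x^m * g x)
  simp only [hm.neg_pow, hg, neg_neg, neg_mul, intervalIntegral.integral_neg] at h
  linarith

lemma km_S0 (d : ℝ) (hd : 0 < d) : ∫ x in (-d)..d, √(d^2-x^2) = π/2 * d^2 := by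
  have h := intervalIntegral.integral_comp_mul_left (a := -1) (b := 1) (fun x => √(d^2-x^2)) hd.ne'
  have e : ∀ x : ℝ, √(d^2-(d*x)^2) = d * √(1-x^2) := by
    intro x
    rw [show d^2-(d*x)^2 = d^2*(1-x^2) by ring, Real.sqrt_mul (by positivity), Real.sqrt_sq hd.le]
  simp only [e, intervalIntegral.integral_const_mul, integral_sqrt_one_sub_sq] at h
  simp only [mul_neg, mul_one, smul_eq_mul] at h
  field_simp at h ⊢
  linarith

lemma km_Srec (d : ℝ) (hd : 0 < d) (k : ℕ) : 
    (2*k+4) * ∫ x in (-d)..d, x^(2*(k+1)) * √(d^2-x^2) = 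
     (2*k+1) * d^2 * ∫ x in (-d)..d, x^(2*k) * √(d^2-x^2) := by
  have hc1 : Continuous fun x:ℝ => x^(2*(k+1)) * √(d^2-x^2) := by fun_prop
  have hc0 : Continuous fun x:ℝ => x^(2*k) * √(d^2-x^2) := by fun_prop
  have key : ∫ x in (-d)..d, ((2*k+1) * d^2 * (x^(2*k) * √(d^2-x^2)) - (2*k+4) * (x^(2*(k+1)) * √(d^2-x^2))) 
     = (d^(2*k+1) * ((d^2-d^2) * √(d^2-d^2))) - ((-d)^(2*k+1) * ((d^2-(-d)^2) * √(d^2-(-d)^2))) := by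
    apply intervalIntegral.integral_eq_sub_of_hasDerivAt_of_le (f := fun x => x^(2*k+1) * ((d^2-x^2) * √(d^2-x^2))) (by linarith)
    · fun_prop
    · intro x hx
      have hp : 0 < d^2 - x^2 := by
        have := abs_lt.2 hx
        have := sq_lt_sq' hx.1 hx.2
        linarith
      have h1 : HasDerivAt (fun x:ℝ => d^2-x^2) (-(2*x)) x := by
        simpa using (hasDerivAt_pow 2 x).const_sub (d^2)
      have h2 := h1.sqrt hp.ne'
      have h3 := (hasDerivAt_pow (2*k+1) x).mul (h1.mul h2)
      refine h3.congr_deriv ?_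
      have hs : √(d^2-x^2) ≠ 0 := (Real.sqrt_pos.2 hp).ne'
      have hss : √(d^2-x^2)^2 = d^2-x^2 := Real.sq_sqrt hp.le
      simp
      field_simp
      rw [hss]
      ring
    · exact (by fun_prop : Continuous _).intervalIntegrable _ _
  rw [intervalIntegral.integral_sub ((hc0.intervalIntegrable _ _).const_mul _) ((hc1.intervalIntegrable _ _).const_mul _),
    intervalIntegral.integral_const_mul, intervalIntegral.integral_const_mul] at key
  simp at key
  linarith

lemma km_S (d : ℝ) (hd : 0 < d) (k : ℕ) : 
    ∫ x in (-d)..d, x^(2*k) * √(d^2-x^2) = π/2 * d^2 * (d^2/4)^k * kmE k 0 := by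
  induction k with
  | zero => simpa [kmE] using km_S0 d hd
  | succ k ih =>
    have h := km_Srec d hd k
    rw [ih, kmE_zero] at h
    rw [kmE_zero]
    have hb : ((k:ℝ)+1) * Nat.centralBinom (k+1) = 2*(2*k+1)*Nat.centralBinom k := by
      exact_mod_cast Nat.succ_mul_centralBinom_succ k
    have p : (2*(k:ℝ)+4) ≠ 0 := by positivity
    apply mul_left_cancel₀ p
    rw [h]
    push_cast
    have p : ((k:ℝ)+1+1) ≠ 0 := by positivity
    have p' : ((k:ℝ)+1) ≠ 0 := by positivity
    rw [pow_succ (d^2/4) k]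
    generalize (d^2/4)^k = Y
    field_simp
    linear_combination (-2*((k:ℝ)+2) * Y) * hb

lemma km_I0 (d c : ℝ) (hd : 0 < d) (hc : 0 ≤ c) (hdc : d^2+c^2=1) :
    IntervalIntegrable (fun x => √(d^2-x^2)/(1-x^2)) MeasureTheory.volume (-d) d ∧ 
    ∫ x in (-d)..d, √(d^2-x^2)/(1-x^2) = π * (1-c) := by
  set F : ℝ → ℝ := fun x => arcsin (x/d) - c * arcsin (c*x/(d*√(1-x^2))) with hF
  have hcont : ContinuousOn F (Set.Icc (-d) d) := by
    rcases hc.eq_or_lt with rfl | hc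
    · simp only [hF, zero_mul, sub_zero]
      exact (Real.continuous_arcsin.comp (by fun_prop)).continuousOn
    · apply ContinuousOn.sub
      · exact (Real.continuous_arcsin.comp (by fun_prop)).continuousOn
      · apply ContinuousOn.mul continuousOn_const
        apply Real.continuous_arcsin.comp_continuousOn
        apply ContinuousOn.div (by fun_prop) (by fun_prop)
        intro x hx
        have : 0 < 1 - x^2 := by
          have : x^2 ≤ d^2 := sq_le_sq' hx.1 hx.2
          have := pow_pos hc 2
          linarith
        have := Real.sqrt_pos.2 this
        positivity
  have hder : ∀ x ∈ Set.Ioo (-d) d, HasDerivAt F (√(d^2-x^2)/(1-x^2)) x := by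
    intro x hx
    have hp : 0 < d^2 - x^2 := by
      have := sq_lt_sq' hx.1 hx.2
      linarith
    have hp1 : 0 < 1 - x^2 := by nlinarith [sq_nonneg c]
    set s := √(d^2-x^2) with hs
    set r := √(1-x^2) with hr
    have hs0 : 0 < s := Real.sqrt_pos.2 hp
    have hr0 : 0 < r := Real.sqrt_pos.2 hp1
    have hss : s^2 = d^2-x^2 := Real.sq_sqrt hp.le
    have hrr : r^2 = 1-x^2 := Real.sq_sqrt hp1.le
    have q1 : 1 - (x/d)^2 = (s/d)^2 := by field_simp; linarith
    have q2 : 1 - (c*x/(d*r))^2 = (s/(d*r))^2 := by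
      field_simp
      rw [hrr, hss]
      linear_combination (-x^2) * hdc
    have n1 : 0 < 1 - (x/d)^2 := by rw [q1]; positivity
    have n2 : 0 < 1 - (c*x/(d*r))^2 := by rw [q2]; positivity
    have a1 : HasDerivAt arcsin (1/√(1-(x/d)^2)) (x/d) :=
      Real.hasDerivAt_arcsin (by intro h; rw [h] at n1; norm_num at n1) (by intro h; rw [h] at n1; norm_num at n1)
    have a2 : HasDerivAt arcsin (1/√(1-(c*x/(d*r))^2)) (c*x/(d*r)) :=
      Real.hasDerivAt_arcsin (by intro h; rw [h] at n2; norm_num at n2) (by intro h; rw [h] at n2; norm_num at n2)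
    rw [q1, Real.sqrt_sq (by positivity)] at a1
    rw [q2, Real.sqrt_sq (by positivity)] at a2
    have b1 : HasDerivAt (fun x:ℝ => 1-x^2) (-(2*x)) x := by
        simpa using (hasDerivAt_pow 2 x).const_sub 1
    have b2 := (b1.sqrt hp1.ne').const_mul d
    have b3 := ((hasDerivAt_id x).const_mul c).div b2 (by positivity)
    have t1 := HasDerivAt.comp x a1 ((hasDerivAt_id x).div_const d)
    have t2 := HasDerivAt.comp x a2 b3
    refine (t1.sub (t2.const_mul c)).congr_deriv ?_
    rw [← hr, ← hrr]
    simp only [id]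
    field_simp
    have : x^2 = 1 - r^2 := by linarith
    have e1 : s^2 = d^2 - 1 + r^2 := by linarith
    have e2 : c^2 = 1 - d^2 := by linarith
    rw [e1]
    ring_nf
    simp only [this, e2]
    ring
  have hint : IntervalIntegrable (fun x => √(d^2-x^2)/(1-x^2)) MeasureTheory.volume (-d) d := by
    rw [intervalIntegrable_iff_integrableOn_Ioc_of_le (by linarith)]
    apply intervalIntegral.integrableOn_deriv_of_nonneg hcont hder
    intro x hx
    have hp : 0 < d^2 - x^2 := by
      have := sq_lt_sq' hx.1 hx.2
      linarith
    have hp1 : 0 < 1 - x^2 := by nlinarith [sq_nonneg c]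
    positivity
  refine ⟨hint, ?_⟩
  rw [intervalIntegral.integral_eq_sub_of_hasDerivAt_of_le (by linarith) hcont hder hint]
  simp only [hF]
  have : 1 - d^2 = c^2 := by linarith
  rw [neg_sq, this, Real.sqrt_sq hc, neg_div, div_self hd.ne']
  rcases hc.eq_or_lt with rfl | hc
  · simp
  · have : c * d/(d*c) = 1 := by field_simp
    rw [mul_neg, neg_div, this]
    simp
    ring

lemma km_main (n : ℕ) (hn : 2 ≤ n) (d : ℝ) (hd : d = 2 * √((n:ℝ)-1)/n) (K : ℕ) :
   ∫ x in (-d)..d, x^(2*(K+1)) * ((n:ℝ) * √(d^2-x^2) / (2*π*(1-x^2))) = 1/(n:ℝ)^(2*(K+1)) * kmT ((n:ℝ)-1) K := by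
  have hn' : (2:ℝ) ≤ n := by exact_mod_cast hn
  have hq : 0 < (n:ℝ) - 1 := by linarith
  have hn0 : (0:ℝ) < n := by linarith
  have hd0 : 0 < d := by rw [hd]; have := Real.sqrt_pos.2 hq; positivity
  have hd2 : d^2 = 4*((n:ℝ)-1)/n^2 := by
    rw [hd, div_pow, mul_pow, Real.sq_sqrt hq.le]; norm_num
  obtain ⟨hi, h0⟩ := km_I0 d (((n:ℝ)-2)/n) hd0 (div_nonneg (by linarith) hn0.le) (by
    rw [hd2]; field_simp; ring)
  have hik : ∀ k : ℕ, IntervalIntegrable (fun x => x^(2*k) * (√(d^2-x^2)/(1-x^2))) MeasureTheory.volume (-d) d := by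
    intro k
    exact hi.continuousOn_mul (by fun_prop)
  set J : ℕ → ℝ := fun k => ∫ x in (-d)..d, x^(2*k) * (√(d^2-x^2)/(1-x^2)) with hJ
  have hJ0 : J 0 = 2*π/n := by
    simp only [hJ, mul_zero, pow_zero, one_mul, h0]
    field_simp; ring
  have hJrec : ∀ k, J (k+1) = J k - π/2 * d^2 * (d^2/4)^k * kmE k 0 := by
    intro k
    rw [← km_S d hd0 k, eq_sub_iff_add_eq, ← eq_sub_iff_add_eq']
    simp only [hJ]
    rw [← intervalIntegral.integral_sub (hik k) (hik (k+1))]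
    apply intervalIntegral.integral_congr_ae
    have hne : ∀ᵐ x : ℝ, x ≠ 1 := by simp [MeasureTheory.ae_iff]
    have hne' : ∀ᵐ x : ℝ, x ≠ -1 := by simp [MeasureTheory.ae_iff]
    filter_upwards [hne, hne'] with x h1 h2 _
    have : 1 - x^2 ≠ 0 := by
      intro h
      have : (1-x)*(1+x) = 0 := by linarith
      rcases mul_eq_zero.1 this with h | h
      · exact h1 (by linarith)
      · exact h2 (by linarith)
    field_simp
    ring
  have hint : ∫ x in (-d)..d, x^(2*(K+1)) * ((n:ℝ) * √(d^2-x^2) / (2*π*(1-x^2))) = n/(2*π) * J (K+1) := by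
    simp only [hJ]
    rw [← intervalIntegral.integral_const_mul]
    congr 1
    ext x
    rw [mul_div_mul_comm]
    ring
  rw [hint]
  have hd4 : d^2/4 = ((n:ℝ)-1)/n^2 := by rw [hd2]; ring
  clear hint
  induction K with
  | zero =>
    rw [hJrec, hJ0, hd2]
    simp [kmT, kmE]
    field_simp
    ring
  | succ K ih =>
    rw [hJrec, mul_sub, ih, kmT_rec _ hq, hd4, hd2, sub_add_cancel, div_pow]
    field_simp
    ring

/-- Moments of the Kesten–McKay measure. -/
theorem stmt8 (m n : ℕ) (hm : 1 ≤ m) (hn : 2 ≤ n) :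
    (∫ x in (-(2 * Real.sqrt ((n : ℝ) - 1) / n))..(2 * Real.sqrt ((n : ℝ) - 1) / n),
        x ^ m * ((n : ℝ) * Real.sqrt ((2 * Real.sqrt ((n : ℝ) - 1) / n) ^ 2 - x ^ 2)
          / (2 * π * (1 - x ^ 2))))
      = if Odd m then 0 else
          (1 / (n : ℝ) ^ m) * ∑ j ∈ Finset.Icc 1 (m / 2),
            (Nat.choose (m - j) (m / 2) : ℝ) * ((j : ℝ) / ((m : ℝ) - j))
              * (n : ℝ) ^ j * ((n : ℝ) - 1) ^ (m / 2 - j) := by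
  split_ifs with h
  · exact km_odd m h (fun x => (n : ℝ) * Real.sqrt ((2 * Real.sqrt ((n : ℝ) - 1) / n) ^ 2 - x ^ 2)
          / (2 * π * (1 - x ^ 2))) (by intro x; simp) _
  · obtain ⟨k, hk⟩ := Nat.not_odd_iff_even.1 h
    obtain ⟨K, rfl⟩ : ∃ K, k = K+1 := ⟨k-1, by omega⟩
    obtain rfl : m = 2*(K+1) := by omega
    rw [show 2*(K+1)/2 = K+1 by omega, kmT_eq n K hn]
    exact km_main n hn _ rfl K
end

section
/- Let f: ℝ^N → ℝ be convex and L-Lipschitz (with respect to the Euclidean norm), and let X be a standard Gaussian vector in ℝ^N. Then for every ε > 0, P(f(X) > E[f(X)] + ε) ≤ (1/2) e^{-ε²/(2L²)}. -/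
open MeasureTheory ProbabilityTheory Real
open Set Filter Topology


/-- standard Gaussian on the line -/
noncomputable abbrev gam : Measure ℝ := gaussianReal 0 1

/-- standard Gaussian cdf -/
noncomputable def gPhi (x : ℝ) : ℝ := gam.real (Iic x)

/-- standard Gaussian density -/
noncomputable def gphi (x : ℝ) : ℝ := gaussianPDFReal 0 1 x

lemma gphi_eq (x : ℝ) : gphi x = (√(2 * π))⁻¹ * rexp (-x ^ 2 / 2) := by
  simp [gphi, gaussianPDFReal]

lemma gphi_pos (x : ℝ) : 0 < gphi x := gaussianPDFReal_pos 0 1 x (by norm_num)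

lemma gphi_neg (x : ℝ) : gphi (-x) = gphi x := by simp [gphi_eq]

lemma gphi_hasDerivAt (x : ℝ) : HasDerivAt gphi (-x * gphi x) x := by
  have h : HasDerivAt (fun x : ℝ => (√(2 * π))⁻¹ * rexp (-x ^ 2 / 2))
      ((√(2 * π))⁻¹ * (rexp (-x ^ 2 / 2) * (-(2 * x) / 2))) x := by
    have h1 : HasDerivAt (fun x : ℝ => -x ^ 2 / 2) (-(2 * x) / 2) x := by
      simpa using ((hasDerivAt_pow 2 x).neg).div_const 2
    exact (h1.exp).const_mul _
  rw [show gphi = fun x : ℝ => (√(2 * π))⁻¹ * rexp (-x ^ 2 / 2) from funext gphi_eq]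
  convert h using 1
  ring

lemma gphi_cont : Continuous gphi :=
  continuous_iff_continuousAt.2 fun x => (gphi_hasDerivAt x).continuousAt

lemma gphi_integrable : Integrable gphi := integrable_gaussianPDFReal 0 1

lemma gPhi_eq_integral (x : ℝ) : gPhi x = ∫ t in Iic x, gphi t := by
  rw [gPhi, Measure.real, gaussianReal_apply_eq_integral 0 (by norm_num)]
  exact ENNReal.toReal_ofReal (integral_nonneg fun t => (gphi_pos t).le)

lemma gPhi_sub (a b : ℝ) : gPhi b - gPhi a = ∫ t in a..b, gphi t := by
  rw [gPhi_eq_integral, gPhi_eq_integral]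
  exact intervalIntegral.integral_Iic_sub_Iic gphi_integrable.integrableOn
    gphi_integrable.integrableOn

lemma gPhi_hasDerivAt (x : ℝ) : HasDerivAt gPhi (gphi x) x := by
  have h : HasDerivAt (fun u => gPhi 0 + ∫ t in (0:ℝ)..u, gphi t) (gphi x) x := by
    refine HasDerivAt.const_add _ ?_
    exact intervalIntegral.integral_hasDerivAt_right (gphi_cont.intervalIntegrable _ _)
      gphi_cont.stronglyMeasurable.stronglyMeasurableAtFilter gphi_cont.continuousAt
  convert h using 1
  funext u
  rw [← gPhi_sub]; ring

lemma gPhi_cont : Continuous gPhi :=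
  continuous_iff_continuousAt.2 fun x => (gPhi_hasDerivAt x).continuousAt

lemma gPhi_strictMono : StrictMono gPhi :=
  strictMono_of_hasDerivAt_pos gPhi_hasDerivAt gphi_pos

lemma gPhi_eq_cdf : gPhi = cdf gam := by
  funext x; rw [cdf_eq_real]; rfl

lemma gPhi_atTop : Tendsto gPhi atTop (𝓝 1) := by rw [gPhi_eq_cdf]; exact tendsto_cdf_atTop _
lemma gPhi_atBot : Tendsto gPhi atBot (𝓝 0) := by rw [gPhi_eq_cdf]; exact tendsto_cdf_atBot _

lemma gPhi_pos (x : ℝ) : 0 < gPhi x :=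
  lt_of_le_of_lt (by unfold gPhi; positivity) (gPhi_strictMono (sub_one_lt x))

lemma gPhi_lt_one (x : ℝ) : gPhi x < 1 :=
  lt_of_lt_of_le (gPhi_strictMono (lt_add_one x)) measureReal_le_one

lemma gPhi_surj {y : ℝ} (h0 : 0 < y) (h1 : y < 1) : ∃ x, gPhi x = y := by
  obtain ⟨a, ha⟩ := (gPhi_atBot.eventually_lt_const h0).exists
  obtain ⟨b, hb⟩ := (gPhi_atTop.eventually_const_lt h1).exists
  exact mem_range_of_exists_le_of_exists_ge gPhi_cont ⟨a, ha.le⟩ ⟨b, hb.le⟩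

instance gam_noatoms : NullSingletonClass gam := nullSingletonClass_gaussianReal (by norm_num)

lemma gam_Icc {a b : ℝ} (h : a ≤ b) : gam.real (Icc a b) = gPhi b - gPhi a := by
  have : Ioc a b = Iic b \ Iic a := by ext; simp [and_comm]
  rw [measureReal_congr (Ioc_ae_eq_Icc (μ := gam) (a := a) (b := b)).symm, this,
    measureReal_diff (Iic_subset_Iic.2 h) measurableSet_Iic]
  rfl

lemma gam_neg : gam.map (fun x => -x) = gam := by
  have := gaussianReal_map_neg (μ := 0) (v := 1)
  simpa using this

lemma gPhi_neg (x : ℝ) : gPhi (-x) = 1 - gPhi x := by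
  have h1 : gPhi (-x) = gam.real (Ici x) := by
    unfold gPhi
    conv_lhs => rw [← gam_neg]
    rw [map_measureReal_apply measurable_neg measurableSet_Iic]
    congr 1; ext; simp
  have h2 : gam.real (Ici x) = gam.real (Iic x)ᶜ := by
    rw [compl_Iic]; exact measureReal_congr Ioi_ae_eq_Ici.symm
  rw [h1, h2, probReal_compl_eq_one_sub measurableSet_Iic]; rfl

lemma gPhi_zero : gPhi 0 = 1 / 2 := by
  have := gPhi_neg 0
  simp at this; linarith

lemma gphi_atTop : Tendsto gphi atTop (𝓝 0) := by
  have h : Tendsto (fun x : ℝ => (√(2 * π))⁻¹ * rexp (-x ^ 2 / 2)) atTop (𝓝 ((√(2 * π))⁻¹ * 0)) := by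
    refine Tendsto.const_mul _ (Real.tendsto_exp_atBot.comp ?_)
    have : Tendsto (fun x : ℝ => x ^ 2 / 2) atTop atTop :=
      (tendsto_pow_atTop (by norm_num)).atTop_div_const (by norm_num)
    refine (tendsto_neg_atTop_atBot.comp this).congr fun x => ?_
    simp only [Function.comp]; ring
  rw [mul_zero] at h
  exact h.congr fun x => (gphi_eq x).symm

/-- auxiliary function -/
noncomputable def auxD (y s : ℝ) : ℝ := gphi s / s - (1 + 1 / y ^ 2) * (1 - gPhi s)

lemma auxD_deriv (y s : ℝ) (hs : 0 < s) :
    HasDerivAt (auxD y) (gphi s * (1 / y ^ 2 - 1 / s ^ 2)) s := by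
  have h := ((gphi_hasDerivAt s).div (hasDerivAt_id s) hs.ne').sub
    (((gPhi_hasDerivAt s).const_sub 1).const_mul (1 + 1 / y ^ 2))
  refine HasDerivAt.congr_deriv (f := auxD y) h ?_
  simp only [id]
  field_simp
  ring

lemma auxD_anti (y z : ℝ) (hz : 0 < z) (hzy : z ≤ y) : auxD y y ≤ auxD y z := by
  have : AntitoneOn (auxD y) (Icc z y) := by
    refine antitoneOn_of_deriv_nonpos (convex_Icc _ _) ?_ ?_ ?_
    · intro s hs; exact (auxD_deriv y s (by linarith [hs.1])).continuousAt.continuousWithinAt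
    · intro s hs; rw [interior_Icc] at hs
      exact (auxD_deriv y s (by linarith [hs.1])).differentiableAt.differentiableWithinAt
    · intro s hs; rw [interior_Icc] at hs
      have h0 : 0 < s := by linarith [hs.1]
      rw [(auxD_deriv y s h0).deriv]
      refine mul_nonpos_of_nonneg_of_nonpos (gphi_pos s).le ?_
      have : 1 / y ^ 2 ≤ 1 / s ^ 2 := by
        apply one_div_le_one_div_of_le (by positivity)
        exact pow_le_pow_left₀ h0.le hs.2.le 2
      linarith
  exact this ⟨le_rfl, hzy⟩ ⟨hzy, le_rfl⟩ hzy

lemma auxD_nonpos (x : ℝ) (hx : 0 < x) : auxD x x ≤ 0 := by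
  have : MonotoneOn (auxD x) (Ici x) := by
    refine monotoneOn_of_deriv_nonneg (convex_Ici _) ?_ ?_ ?_
    · intro s hs; exact (auxD_deriv x s (lt_of_lt_of_le hx hs)).continuousAt.continuousWithinAt
    · intro s hs; rw [interior_Ici] at hs
      exact (auxD_deriv x s (lt_trans hx hs)).differentiableAt.differentiableWithinAt
    · intro s hs; rw [interior_Ici] at hs
      have h0 : 0 < s := lt_trans hx hs
      rw [(auxD_deriv x s h0).deriv]
      refine mul_nonneg (gphi_pos s).le ?_
      have : 1 / s ^ 2 ≤ 1 / x ^ 2 := by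
        apply one_div_le_one_div_of_le (by positivity)
        exact pow_le_pow_left₀ hx.le (le_of_lt hs) 2
      linarith
  have hlim : Tendsto (auxD x) atTop (𝓝 (0 * 0 - (1 + 1 / x ^ 2) * (1 - 1))) := by
    refine Tendsto.sub ?_ ((gPhi_atTop.const_sub 1).const_mul _)
    simpa [div_eq_mul_inv] using gphi_atTop.mul tendsto_inv_atTop_zero
  simp only [mul_zero, sub_self] at hlim
  refine ge_of_tendsto hlim ?_
  filter_upwards [eventually_ge_atTop x] with s hs
  exact this self_mem_Ici hs hs

lemma super_aux {x y z : ℝ} (hx : 0 < x) (hy : 0 < y) (hz : 0 < z) (hyx : y ≤ x)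
    (h : (1 - gPhi x) + (1 - gPhi y) = 1 - gPhi z) :
    gphi x / x + gphi y / y ≤ gphi z / z := by
  have hzy : z ≤ y := by
    apply (gPhi_strictMono.le_iff_le).1; linarith [gPhi_lt_one x]
  have h1 := auxD_anti y z hz hzy
  have h2 := auxD_nonpos x hx
  unfold auxD at h1 h2
  have h3 : 1 / x ^ 2 ≤ 1 / y ^ 2 := by
    apply one_div_le_one_div_of_le (by positivity)
    exact pow_le_pow_left₀ hy.le hyx 2
  have h4 : (1 + 1 / x ^ 2) * (1 - gPhi x) ≤ (1 + 1 / y ^ 2) * (1 - gPhi x) := by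
    apply mul_le_mul_of_nonneg_right (by linarith); linarith [gPhi_lt_one x]
  have h5 : 1 - gPhi x = (1 - gPhi z) - (1 - gPhi y) := by linarith
  have h6 : (1 + 1 / y ^ 2) * (1 - gPhi x)
    = (1 + 1 / y ^ 2) * (1 - gPhi z) - (1 + 1 / y ^ 2) * (1 - gPhi y) := by rw [h5]; ring
  linarith

lemma super {x y z : ℝ} (hx : 0 < x) (hy : 0 < y) (hz : 0 < z)
    (h : (1 - gPhi x) + (1 - gPhi y) = 1 - gPhi z) :
    gphi x / x + gphi y / y ≤ gphi z / z := by
  rcases le_total y x with h' | h'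
  · exact super_aux hx hy hz h' h
  · rw [add_comm]; exact super_aux hy hx hz h' (by linarith)

/-- Cauchy-Schwarz in the form used below -/
lemma titu {A B x y r s : ℝ} (hA : 0 < A) (hB : 0 < B) (hx : 0 < x) (hy : 0 < y) :
    (r + s) ^ 2 ≤ (x * r ^ 2 / A + y * s ^ 2 / B) * (A / x + B / y) := by
  have e : (x * r ^ 2 / A + y * s ^ 2 / B) * (A / x + B / y) - (r + s) ^ 2
      = (x * B * r - y * A * s) ^ 2 / (A * B * x * y) := by
    field_simp; ring
  have : 0 ≤ (x * B * r - y * A * s) ^ 2 / (A * B * x * y) := by positivity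
  linarith

lemma titu' {A B C x y z r s : ℝ} (hA : 0 < A) (hB : 0 < B) (hC : 0 < C)
    (hx : 0 < x) (hy : 0 < y) (hz : 0 < z) (h : A / x + B / y ≤ C / z) :
    z * (r + s) ^ 2 / C ≤ x * r ^ 2 / A + y * s ^ 2 / B := by
  have h1 := titu (r := r) (s := s) hA hB hx hy
  have h2 : (r + s) ^ 2 ≤ (x * r ^ 2 / A + y * s ^ 2 / B) * (C / z) :=
    h1.trans (mul_le_mul_of_nonneg_left h (by positivity))
  calc z * (r + s) ^ 2 / C = (z / C) * (r + s) ^ 2 := by ring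
    _ ≤ (z / C) * ((x * r ^ 2 / A + y * s ^ 2 / B) * (C / z)) :=
        mul_le_mul_of_nonneg_left h2 (by positivity)
    _ = _ := by field_simp

lemma half_lt {x : ℝ} : 1 / 2 < gPhi x ↔ 0 < x := by
  rw [← gPhi_zero]; exact gPhi_strictMono.lt_iff_lt

lemma quad_aux {a b p w1 w2 : ℝ} (ha : 0 < a) (h : gPhi b - gPhi a = gPhi p) :
    -b * (w2 ^ 2 / gphi b) + a * (w1 ^ 2 / gphi a) + p * ((w2 - w1) ^ 2 / gphi p) ≤ 0 := by
  have hab : a < b := gPhi_strictMono.lt_iff_lt.1 (by linarith [gPhi_pos p])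
  have hp : 0 < -p := by
    rw [← half_lt, gPhi_neg]
    linarith [gPhi_lt_one b, half_lt.2 ha]
  have hs := super (hp) (ha.trans hab) ha (by rw [gPhi_neg]; linarith)
  have := titu' (r := w1 - w2) (s := w2) (gphi_pos _) (gphi_pos _) (gphi_pos _)
    hp (ha.trans hab) ha hs
  rw [gphi_neg] at this
  have e : (w1 - w2 + w2) = w1 := by ring
  rw [e] at this
  have e2 : (w2 - w1) ^ 2 = (w1 - w2) ^ 2 := by ring
  rw [e2]
  simp only [mul_div_assoc] at this
  linarith

lemma quad_nonpos {a b p w1 w2 : ℝ} (h : gPhi b - gPhi a = gPhi p) :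
    -b * (w2 ^ 2 / gphi b) + a * (w1 ^ 2 / gphi a) + p * ((w2 - w1) ^ 2 / gphi p) ≤ 0 := by
  have q1 : 0 ≤ w2 ^ 2 / gphi b := div_nonneg (sq_nonneg _) (gphi_pos _).le
  have q2 : 0 ≤ w1 ^ 2 / gphi a := div_nonneg (sq_nonneg _) (gphi_pos _).le
  have q3 : 0 ≤ (w2 - w1) ^ 2 / gphi p := div_nonneg (sq_nonneg _) (gphi_pos _).le
  rcases lt_or_ge 0 a with ha | ha
  · exact quad_aux ha h
  rcases lt_or_ge b 0 with hb | hb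
  · have := quad_aux (a := -b) (b := -a) (p := p) (w1 := -w2) (w2 := -w1) (by linarith)
      (by rw [gPhi_neg, gPhi_neg]; linarith)
    simp only [gphi_neg] at this
    have e : (-w1 - -w2) ^ 2 = (w2 - w1) ^ 2 := by ring
    rw [e, neg_sq, neg_sq] at this
    linarith
  rcases lt_or_ge 0 p with hp | hp
  · have hb' : 0 < b := by
      rw [← half_lt]; linarith [half_lt.2 hp, gPhi_pos a]
    have ha' : 0 < -a := by
      rw [← half_lt, gPhi_neg]; linarith [half_lt.2 hp, gPhi_lt_one b]
    have hs := super hb' ha' hp (by rw [gPhi_neg]; linarith)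
    have := titu' (r := w2) (s := -w1) (gphi_pos _) (gphi_pos _) (gphi_pos _) hb' ha' hp hs
    rw [gphi_neg, neg_sq, ← sub_eq_add_neg] at this
    simp only [mul_div_assoc] at this
    linarith
  · nlinarith [mul_nonneg hb q1, mul_nonneg (neg_nonneg.2 ha) q2, mul_nonneg (neg_nonneg.2 hp) q3]

lemma ehrhard_interval {a b c d p q t : ℝ} (hp : gPhi b - gPhi a = gPhi p)
    (hq : gPhi d - gPhi c = gPhi q) (ht0 : 0 ≤ t) (ht1 : t ≤ 1) :
    gPhi ((1 - t) * p + t * q)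
      ≤ gPhi ((1 - t) * b + t * d) - gPhi ((1 - t) * a + t * c) := by
  have hab : a < b := gPhi_strictMono.lt_iff_lt.1 (by linarith [gPhi_pos p])
  have hcd : c < d := gPhi_strictMono.lt_iff_lt.1 (by linarith [gPhi_pos q])
  set A : ℝ → ℝ := fun t => (1 - t) * a + t * c with hA
  set B : ℝ → ℝ := fun t => (1 - t) * b + t * d with hB
  have dA : ∀ t, HasDerivAt A (c - a) t := fun t => by
    have := (((hasDerivAt_id t).const_sub 1).mul_const a).add ((hasDerivAt_id t).mul_const c)
    refine this.congr_deriv ?_; ring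
  have dB : ∀ t, HasDerivAt B (d - b) t := fun t => by
    have := (((hasDerivAt_id t).const_sub 1).mul_const b).add ((hasDerivAt_id t).mul_const d)
    refine this.congr_deriv ?_; ring
  set H : ℝ → ℝ := fun t => gPhi (B t) - gPhi (A t) with hH
  have dH : ∀ t, HasDerivAt H (gphi (B t) * (d - b) - gphi (A t) * (c - a)) t := fun t =>
    ((gPhi_hasDerivAt _).comp t (dB t)).sub ((gPhi_hasDerivAt _).comp t (dA t))
  have hex : ∀ t, ∃ x, A t < B t → gPhi x = H t := fun t => by
    by_cases h : A t < B t
    · obtain ⟨x, hx⟩ := gPhi_surj (y := H t) (sub_pos.2 (gPhi_strictMono h))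
        (by simp only [hH]; linarith [gPhi_pos (A t), gPhi_lt_one (B t)])
      exact ⟨x, fun _ => hx⟩
    · exact ⟨0, fun h' => absurd h' h⟩
  choose P hP using hex
  have cA : Continuous A := continuous_iff_continuousAt.2 fun x => (dA x).continuousAt
  have cB : Continuous B := continuous_iff_continuousAt.2 fun x => (dB x).continuousAt
  have hev : ∀ t, A t < B t → ∀ᶠ s in 𝓝 t, gPhi (P s) = H s := fun t h => by
    filter_upwards [(isOpen_lt cA cB).mem_nhds h] with s hs using hP s hs
  have cP : ∀ t, A t < B t → ContinuousAt P t := fun t h => by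
    refine tendsto_order.2 ⟨fun x hx => ?_, fun x hx => ?_⟩
    · have : gPhi x < H t := by rw [← hP t h]; exact gPhi_strictMono hx
      filter_upwards [hev t h, (dH t).continuousAt.eventually_const_lt this] with s h1 h2
      exact gPhi_strictMono.lt_iff_lt.1 (by rw [h1]; exact h2)
    · have : H t < gPhi x := by rw [← hP t h]; exact gPhi_strictMono hx
      filter_upwards [hev t h, (dH t).continuousAt.eventually_lt_const this] with s h1 h2
      exact gPhi_strictMono.lt_iff_lt.1 (by rw [h1]; exact h2)
  set P' : ℝ → ℝ := fun t => (gphi (B t) * (d - b) - gphi (A t) * (c - a)) / gphi (P t) with hP'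
  have dP : ∀ t, A t < B t → HasDerivAt P (P' t) t := fun t h =>
    HasDerivAt.of_comp_left (cP t h) (gPhi_hasDerivAt _) (dH t) (gphi_pos _).ne' (hev t h)
  have hlt : ∀ t ∈ Icc (0:ℝ) 1, A t < B t := fun t ht => by
    simp only [hA, hB]
    rcases eq_or_lt_of_le ht.1 with h | h
    · rw [← h]; simpa using hab
    · nlinarith [ht.2]
  have conc : ConcaveOn ℝ (Icc (0:ℝ) 1) P := by
    refine concaveOn_of_hasDerivWithinAt2_nonpos (f' := P')
      (f'' := fun t => ((-(B t) * gphi (B t) * (d - b) * (d - b)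
        - -(A t) * gphi (A t) * (c - a) * (c - a)) * gphi (P t)
        - (gphi (B t) * (d - b) - gphi (A t) * (c - a)) * (-(P t) * gphi (P t) * P' t))
          / gphi (P t) ^ 2) (convex_Icc _ _)
      (fun t ht => (cP t (hlt t ht)).continuousWithinAt) ?_ ?_ ?_
    · intro t ht; exact (dP t (hlt t (interior_subset ht))).hasDerivWithinAt
    · intro t ht
      have hl := hlt t (interior_subset ht)
      refine HasDerivAt.hasDerivWithinAt ?_
      exact (((((gphi_hasDerivAt _).comp t (dB t)).mul_const (d - b)).sub
        (((gphi_hasDerivAt _).comp t (dA t)).mul_const (c - a))).div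
          ((gphi_hasDerivAt _).comp t (dP t hl)) (gphi_pos _).ne')
    · intro t ht
      have hl := hlt t (interior_subset ht)
      have := quad_nonpos (w1 := gphi (A t) * (c - a)) (w2 := gphi (B t) * (d - b)) (hP t hl).symm
      have p1 := gphi_pos (A t)
      have p2 := gphi_pos (B t)
      have p3 := gphi_pos (P t)
      simp only [hP']
      rw [div_le_iff₀ (by positivity), zero_mul]
      have e : (-(B t) * gphi (B t) * (d - b) * (d - b)
        - -(A t) * gphi (A t) * (c - a) * (c - a)) * gphi (P t)
        - (gphi (B t) * (d - b) - gphi (A t) * (c - a)) * (-(P t) * gphi (P t)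
          * ((gphi (B t) * (d - b) - gphi (A t) * (c - a)) / gphi (P t)))
        = gphi (P t) * (-(B t) * ((gphi (B t) * (d - b)) ^ 2 / gphi (B t))
          + A t * ((gphi (A t) * (c - a)) ^ 2 / gphi (A t))
          + P t * ((gphi (B t) * (d - b) - gphi (A t) * (c - a)) ^ 2 / gphi (P t))) := by
        field_simp
        ring
      rw [e]
      exact mul_nonpos_of_nonneg_of_nonpos p3.le this
  have h0 : P 0 = p := by
    apply gPhi_strictMono.injective
    rw [hP 0 (hlt 0 (by simp)), ← hp]; simp [hH, hA, hB]
  have h1 : P 1 = q := by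
    apply gPhi_strictMono.injective
    rw [hP 1 (hlt 1 (by simp)), ← hq]; simp [hH, hA, hB]
  have := conc.2 (show (0:ℝ) ∈ Icc (0:ℝ) 1 by simp) (show (1:ℝ) ∈ Icc (0:ℝ) 1 by simp)
    (show 0 ≤ 1 - t by linarith) ht0 (by ring)
  simp only [smul_eq_mul, h0, h1, mul_zero, mul_one, zero_add] at this
  calc _ ≤ gPhi (P t) := gPhi_strictMono.monotone this
    _ = _ := hP t (hlt t ⟨ht0, ht1⟩)

/-- A convex set of measure more than `Φ p` contains a compact interval of measure `Φ p`. -/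
lemma exists_interval {A : Set ℝ} (hA : Convex ℝ A) (hm : MeasurableSet A) {p : ℝ}
    (h : gPhi p < gam.real A) : ∃ a b, Icc a b ⊆ A ∧ gPhi b - gPhi a = gPhi p := by
  have h' : ENNReal.ofReal (gPhi p) < gam A := by
    rw [← ofReal_measureReal (μ := gam) (s := A)]
    exact (ENNReal.ofReal_lt_ofReal_iff ((gPhi_pos p).trans h)).2 h
  obtain ⟨K, hKA, hK, hKm⟩ := hm.exists_lt_isCompact h'
  have hne : K.Nonempty := by
    by_contra hcon
    rw [not_nonempty_iff_eq_empty] at hcon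
    simp [hcon] at hKm
  set a := sInf K
  set b := sSup K
  have haK : a ∈ K := hK.sInf_mem hne
  have hbK : b ∈ K := hK.sSup_mem hne
  have hKI : K ⊆ Icc a b := fun x hx => ⟨csInf_le hK.bddBelow hx, le_csSup hK.bddAbove hx⟩
  have hab : a ≤ b := (hKI haK).2
  have h2 : gPhi p < gPhi b - gPhi a := by
    rw [← gam_Icc hab]
    have : ENNReal.ofReal (gPhi p) < gam (Icc a b) := hKm.trans_le (measure_mono hKI)
    rw [← ofReal_measureReal (μ := gam) (s := Icc a b)] at this
    exact (ENNReal.ofReal_lt_ofReal_iff_of_nonneg (gPhi_pos p).le).1 this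
  have hIA : Icc a b ⊆ A := hA.ordConnected.out (hKA haK) (hKA hbK)
  obtain ⟨c, hc⟩ := gPhi_surj (y := gPhi p + gPhi a) (by linarith [gPhi_pos p, gPhi_pos a])
    (by linarith [gPhi_lt_one b])
  refine ⟨a, c, (Icc_subset_Icc_right ?_).trans hIA, by linarith⟩
  exact gPhi_strictMono.le_iff_le.1 (by linarith)

/-- One-dimensional Ehrhard inequality for convex sets. -/
lemma ehrhard_one {A B C : Set ℝ} (hA : Convex ℝ A) (hB : Convex ℝ B) (mA : MeasurableSet A)
    (mB : MeasurableSet B) {p q t : ℝ} (ht0 : 0 ≤ t) (ht1 : t ≤ 1)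
    (hC : ∀ x ∈ A, ∀ y ∈ B, (1 - t) * x + t * y ∈ C)
    (hp : gPhi p ≤ gam.real A) (hq : gPhi q ≤ gam.real B) :
    gPhi ((1 - t) * p + t * q) ≤ gam.real C := by
  have key : ∀ δ > 0, gPhi ((1 - t) * p + t * q - δ) ≤ gam.real C := by
    intro δ hδ
    obtain ⟨a, b, hab, e1⟩ := exists_interval hA mA (p := p - δ)
      ((gPhi_strictMono (by linarith)).trans_le hp)
    obtain ⟨c, d, hcd, e2⟩ := exists_interval hB mB (p := q - δ)
      ((gPhi_strictMono (by linarith)).trans_le hq)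
    have h := ehrhard_interval e1 e2 ht0 ht1
    have lab : a ≤ b := (gPhi_strictMono.lt_iff_lt.1 (by linarith [gPhi_pos (p - δ)])).le
    have lcd : c ≤ d := (gPhi_strictMono.lt_iff_lt.1 (by linarith [gPhi_pos (q - δ)])).le
    have e3 : (1 - t) * (p - δ) + t * (q - δ) = (1 - t) * p + t * q - δ := by ring
    rw [e3] at h
    have h1t : 0 ≤ 1 - t := by linarith
    have l3 : (1 - t) * a + t * c ≤ (1 - t) * b + t * d := by gcongr
    rw [← gam_Icc l3] at h
    refine h.trans (measureReal_mono ?_)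
    intro z hz
    -- parametrize
    rcases eq_or_lt_of_le l3 with he | hl
    · have : z = (1 - t) * a + t * c := le_antisymm (he ▸ hz.2) hz.1
      rw [this]
      exact hC _ (hab ⟨le_rfl, lab⟩) _ (hcd ⟨le_rfl, lcd⟩)
    · set W := (1 - t) * b + t * d - ((1 - t) * a + t * c) with hW
      have hW0 : 0 < W := by linarith
      set r := (z - ((1 - t) * a + t * c)) / W with hr
      have r0 : 0 ≤ r := div_nonneg (by linarith [hz.1]) hW0.le
      have r1 : r ≤ 1 := by rw [hr, div_le_one hW0]; linarith [hz.2]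
      have ez : z = (1 - t) * (a + r * (b - a)) + t * (c + r * (d - c)) := by
        have : r * W = z - ((1 - t) * a + t * c) := by rw [hr]; field_simp
        rw [hW] at this; linarith
      rw [ez]
      refine hC _ (hab ⟨?_, ?_⟩) _ (hcd ⟨?_, ?_⟩)
      · nlinarith
      · nlinarith
      · nlinarith
      · nlinarith
  have hl : Tendsto (fun δ : ℝ => gPhi ((1 - t) * p + t * q - δ)) (𝓝[>] 0)
      (𝓝 (gPhi ((1 - t) * p + t * q - 0))) :=
    ((gPhi_cont.comp (continuous_const.sub continuous_id)).tendsto 0).mono_left nhdsWithin_le_nhds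
  rw [sub_zero] at hl
  exact le_of_tendsto hl (by filter_upwards [self_mem_nhdsWithin] with δ hδ using key δ hδ)

/-- The set `{Φ ≤ r}` has measure `r`. -/
lemma gam_gPhi_le {r : ℝ} (h0 : 0 ≤ r) (h1 : r ≤ 1) : gam.real {z | gPhi z ≤ r} = r := by
  rcases eq_or_lt_of_le h0 with h | h
  · have : {z | gPhi z ≤ r} = ∅ := by
      ext z; simp only [mem_ofPred_eq, mem_empty_iff_false, iff_false, not_le]
      rw [← h]; exact gPhi_pos z
    rw [this, ← h]; simp
  rcases eq_or_lt_of_le h1 with h' | h'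
  · have : {z | gPhi z ≤ r} = univ := by
      ext z; simp only [mem_ofPred_eq, mem_univ, iff_true]
      rw [h']; exact (gPhi_lt_one z).le
    rw [this, h']; simp
  · obtain ⟨x, hx⟩ := gPhi_surj h h'
    have : {z | gPhi z ≤ r} = Iic x := by
      ext z; simp only [mem_ofPred_eq, mem_Iic]
      rw [← hx]; exact gPhi_strictMono.le_iff_le
    rw [this]; exact hx

/-- tail comparison -/
lemma tail_shift {z c : ℝ} (hz : 0 ≤ z) (hc : 0 ≤ c) :
    1 - gPhi (z + c) ≤ rexp (-c ^ 2 / 2) * (1 - gPhi z) := by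
  have e : ∀ x, 1 - gPhi x = ∫ t in Ioi x, gphi t := fun x => by
    have h1 := integral_add_compl (measurableSet_Iic (a := x)) gphi_integrable
    rw [compl_Iic, ← gPhi_eq_integral] at h1
    have h2 : ∫ t, gphi t = 1 := integral_gaussianPDFReal_eq_one 0 (by norm_num)
    linarith
  rw [e, e]
  have h3 : ∫ t in Ioi (z + c), gphi t = ∫ t in Ioi z, gphi (t + c) := by
    have := (measurePreserving_add_right volume c).setIntegral_preimage_emb
      (measurableEmbedding_addRight c) gphi (Ioi (z + c))
    rw [← this]; simp
  rw [h3, ← integral_const_mul]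
  refine setIntegral_mono_on (gphi_integrable.comp_add_right c).integrableOn
    (gphi_integrable.const_mul _).integrableOn measurableSet_Ioi ?_
  intro t ht
  have ht0 : 0 ≤ t := hz.trans (le_of_lt ht)
  rw [gphi_eq, gphi_eq, mul_left_comm, ← Real.exp_add]
  refine mul_le_mul_of_nonneg_left (Real.exp_le_exp.2 ?_) (by positivity)
  nlinarith [mul_nonneg ht0 hc]

lemma gPhi_tail {c : ℝ} (hc : 0 ≤ c) : 1 - gPhi c ≤ 1 / 2 * rexp (-c ^ 2 / 2) := by
  have := tail_shift le_rfl hc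
  rw [zero_add, gPhi_zero] at this; linarith

/-- symmetric intervals are large -/
lemma gam_symm_Icc (z : ℝ) : gPhi z ≤ gam.real (Icc (-(|z| + 2)) (|z| + 2)) := by
  rw [gam_Icc (by linarith [abs_nonneg z]), gPhi_neg]
  have h1 := tail_shift (abs_nonneg z) (c := 2) (by norm_num)
  have h2 : rexp (-2 ^ 2 / 2) ≤ 1 / 2 := by
    rw [show (-2 ^ 2 / 2 : ℝ) = -2 by norm_num, Real.exp_neg, one_div]
    apply inv_anti₀ (by norm_num)
    linarith [Real.add_one_le_exp (2:ℝ)]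
  have h3 : gPhi z ≤ gPhi |z| := gPhi_strictMono.monotone (le_abs_self z)
  have h4 : 0 ≤ 1 - gPhi |z| := by linarith [gPhi_lt_one |z|]
  nlinarith [mul_le_mul_of_nonneg_right h2 h4]

/-- standard Gaussian on `ℝ^N` -/
noncomputable abbrev muN (N : ℕ) : Measure (Fin N → ℝ) := Measure.pi fun _ : Fin N => gaussianReal 0 1

/-- Euclidean norm -/
noncomputable def nrm {N : ℕ} (x : Fin N → ℝ) : ℝ := √(∑ i, x i ^ 2)

lemma nrm_eq {N : ℕ} (x : Fin N → ℝ) : nrm x = ‖WithLp.toLp 2 x‖ := by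
  rw [EuclideanSpace.norm_eq]; simp [nrm]

lemma nrm_nonneg {N : ℕ} (x : Fin N → ℝ) : 0 ≤ nrm x := Real.sqrt_nonneg _

lemma nrm_sq {N : ℕ} (x : Fin N → ℝ) : nrm x ^ 2 = ∑ i, x i ^ 2 :=
  Real.sq_sqrt (Finset.sum_nonneg fun _ _ => sq_nonneg _)

lemma nrm_add_le {N : ℕ} (x y : Fin N → ℝ) : nrm (x + y) ≤ nrm x + nrm y := by
  simp only [nrm_eq, WithLp.toLp_add]; exact norm_add_le _ _

lemma nrm_smul {N : ℕ} (t : ℝ) (x : Fin N → ℝ) : nrm (t • x) = |t| * nrm x := by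
  simp only [nrm_eq, WithLp.toLp_smul, norm_smul, Real.norm_eq_abs]

lemma nrm_neg {N : ℕ} (x : Fin N → ℝ) : nrm (-x) = nrm x := by
  simp [nrm]

lemma nrm_zero {N : ℕ} : nrm (0 : Fin N → ℝ) = 0 := by
  simp [nrm]

lemma nrm_cont {N : ℕ} : Continuous (nrm : (Fin N → ℝ) → ℝ) := by
  unfold nrm; fun_prop

lemma abs_le_nrm {N : ℕ} (x : Fin N → ℝ) (j : Fin N) : |x j| ≤ nrm x := by
  apply Real.le_sqrt_of_sq_le
  rw [sq_abs]
  exact Finset.single_le_sum (f := fun i => x i ^ 2) (fun i _ => sq_nonneg _) (Finset.mem_univ j)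

lemma nrm_le_sum {N : ℕ} (x : Fin N → ℝ) : nrm x ≤ ∑ i, |x i| := by
  unfold nrm
  rw [Real.sqrt_le_left (Finset.sum_nonneg fun _ _ => abs_nonneg _)]
  have := Finset.sum_sq_le_sq_sum_of_nonneg (s := Finset.univ) (f := fun i => |x i|)
    (fun i _ => abs_nonneg _)
  simpa using this

/-- convex and `L`-Lipschitz -/
structure Cl {N : ℕ} (L : ℝ) (g : (Fin N → ℝ) → ℝ) : Prop where
  conv : ConvexOn ℝ univ g
  lip : ∀ x y, |g x - g y| ≤ L * nrm (x - y)

lemma lip_cont {N : ℕ} {L : ℝ} {g : (Fin N → ℝ) → ℝ}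
    (h : ∀ x y, |g x - g y| ≤ L * nrm (x - y)) : Continuous g := by
  refine continuous_iff_continuousAt.2 fun x => ?_
  rw [ContinuousAt, tendsto_iff_dist_tendsto_zero]
  refine squeeze_zero (fun y => dist_nonneg) (fun y => ?_) (g := fun y => L * nrm (y - x)) ?_
  · rw [Real.dist_eq]; exact h y x
  · have : Continuous fun y : Fin N → ℝ => L * nrm (y - x) :=
      continuous_const.mul (nrm_cont.comp (continuous_id.sub continuous_const))
    simpa [nrm_zero] using this.tendsto x

lemma Cl.cont {N : ℕ} {L : ℝ} {g : (Fin N → ℝ) → ℝ} (h : Cl L g) : Continuous g := lip_cont h.lip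

lemma Cl.growth {N : ℕ} {L : ℝ} {g : (Fin N → ℝ) → ℝ} (h : Cl L g) (x : Fin N → ℝ) :
    |g x| ≤ |g 0| + L * nrm x := by
  have := h.lip x 0
  rw [sub_zero] at this
  have h2 := abs_sub_abs_le_abs_sub (g x) (g 0)
  linarith

lemma memLp_coord {N : ℕ} (j : Fin N) : MemLp (fun x : Fin N → ℝ => x j) 2 (muN N) :=
  (memLp_id_gaussianReal (μ := 0) (v := 1) 2).comp_measurePreserving
    (measurePreserving_eval (fun _ : Fin N => gaussianReal 0 1) j)

lemma memLp_nrm {N : ℕ} : MemLp (nrm : (Fin N → ℝ) → ℝ) 2 (muN N) := by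
  have h : MemLp (fun x : Fin N → ℝ => ∑ i, |x i|) 2 (muN N) :=
    memLp_finsetSum _ fun i _ => (memLp_coord i).abs
  refine h.mono nrm_cont.aestronglyMeasurable (ae_of_all _ fun x => ?_)
  rw [Real.norm_eq_abs, Real.norm_eq_abs, abs_of_nonneg (nrm_nonneg x)]
  exact (nrm_le_sum x).trans (le_abs_self _)

lemma memLp_growth {N : ℕ} {C L : ℝ} {g : (Fin N → ℝ) → ℝ} (hg : Continuous g)
    (h : ∀ x, |g x| ≤ C + L * nrm x) : MemLp g 2 (muN N) := by
  have h' : MemLp (fun x : Fin N → ℝ => C + L * nrm x) 2 (muN N) :=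
    (memLp_const C).add (memLp_nrm.const_mul L)
  refine h'.mono hg.aestronglyMeasurable (ae_of_all _ fun x => ?_)
  rw [Real.norm_eq_abs, Real.norm_eq_abs]
  exact (h x).trans (le_abs_self _)

lemma Cl.memLp {N : ℕ} {L : ℝ} {g : (Fin N → ℝ) → ℝ} (h : Cl L g) : MemLp g 2 (muN N) :=
  memLp_growth h.cont h.growth

lemma Cl.integrable {N : ℕ} {L : ℝ} {g : (Fin N → ℝ) → ℝ} (h : Cl L g) : Integrable g (muN N) :=
  h.memLp.integrable (by norm_num)

lemma Cl.integrable_mul {N : ℕ} {L : ℝ} {g : (Fin N → ℝ) → ℝ} (h : Cl L g) (j : Fin N) :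
    Integrable (fun x => g x * x j) (muN N) := h.memLp.integrable_mul (memLp_coord j)

lemma mp_update {N : ℕ} (j : Fin N) :
    MeasurePreserving (fun p : (Fin N → ℝ) × ℝ => Function.update p.1 j p.2)
      ((muN N).prod gam) (muN N) := by
  have hm : Measurable (fun p : (Fin N → ℝ) × ℝ => Function.update p.1 j p.2) := by
    rw [measurable_pi_iff]
    intro i
    by_cases h : i = j
    · subst h; simpa using measurable_snd
    · simp only [Function.update_of_ne h]
      exact (measurable_pi_apply i).comp measurable_fst
  refine ⟨hm, ?_⟩
  symm
  refine Measure.pi_eq fun s hs => ?_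
  rw [Measure.map_apply hm (MeasurableSet.univ_pi hs)]
  have e : (fun p : (Fin N → ℝ) × ℝ => Function.update p.1 j p.2) ⁻¹' (univ.pi s)
      = (univ.pi (Function.update s j univ)) ×ˢ s j := by
    ext ⟨x, z⟩
    simp only [mem_preimage, Set.mem_pi, mem_univ, true_imp_iff, mem_prod]
    constructor
    · intro h
      refine ⟨fun i => ?_, by simpa using h j⟩
      by_cases hi : i = j
      · subst hi; simp
      · simpa [Function.update_of_ne hi] using h i
    · rintro ⟨h1, h2⟩ i
      by_cases hi : i = j
      · subst hi; simpa using h2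
      · simpa [Function.update_of_ne hi] using h1 i
  rw [e, Measure.prod_prod, Measure.pi_pi, ← Finset.mul_prod_erase _ _ (Finset.mem_univ j),
    ← Finset.mul_prod_erase Finset.univ (fun i => (gaussianReal 0 1) (s i)) (Finset.mem_univ j)]
  simp only [Function.update_self, measure_univ, one_mul]
  rw [mul_comm]
  congr 1
  refine Finset.prod_congr rfl fun i hi => ?_
  rw [Function.update_of_ne (Finset.ne_of_mem_erase hi)]

lemma integral_update {N : ℕ} (j : Fin N) {F : (Fin N → ℝ) → ℝ}
    (hF : AEStronglyMeasurable F (muN N)) :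
    ∫ x, F x ∂(muN N) = ∫ p : (Fin N → ℝ) × ℝ, F (Function.update p.1 j p.2) ∂((muN N).prod gam) := by
  rw [← integral_map (mp_update j).measurable.aemeasurable
    (by rw [(mp_update j).map_eq]; exact hF), (mp_update j).map_eq]

/-- quantile rearrangement of a function on the line -/
noncomputable def quant (k : ℝ → ℝ) (z : ℝ) : ℝ :=
  sInf {τ | gPhi z ≤ gam.real {s | k s ≤ τ}}

lemma quant_le_iff {k : ℝ → ℝ} (hk : Measurable k) {z τ : ℝ} :
    quant k z ≤ τ ↔ gPhi z ≤ gam.real {s | k s ≤ τ} := by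
  have : IsProbabilityMeasure (gam.map k) := Measure.isProbabilityMeasure_map hk.aemeasurable
  have hF : ∀ τ, gam.real {s | k s ≤ τ} = cdf (gam.map k) τ := fun τ => by
    rw [cdf_eq_real, map_measureReal_apply hk measurableSet_Iic]; rfl
  unfold quant
  simp only [hF]
  set S := {τ | gPhi z ≤ cdf (gam.map k) τ} with hS
  have hne : S.Nonempty := by
    obtain ⟨b, hb⟩ := ((tendsto_cdf_atTop (gam.map k)).eventually_const_lt (gPhi_lt_one z)).exists
    exact ⟨b, hb.le⟩
  have hbd : BddBelow S := by
    obtain ⟨a, ha⟩ := ((tendsto_cdf_atBot (gam.map k)).eventually_lt_const (gPhi_pos z)).exists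
    refine ⟨a, fun τ hτ => ?_⟩
    by_contra hlt
    have h1 := monotone_cdf (gam.map k) (not_le.1 hlt).le
    exact absurd (le_trans (show gPhi z ≤ cdf (gam.map k) τ from hτ) h1) (not_le.2 ha)
  constructor
  · intro h
    have h2 : gPhi z ≤ cdf (gam.map k) (sInf S) := by
      have hr : Tendsto (cdf (gam.map k)) (𝓝[>] (sInf S)) (𝓝 (cdf (gam.map k) (sInf S))) :=
        ((cdf (gam.map k)).right_continuous (sInf S)).mono Ioi_subset_Ici_self
      refine ge_of_tendsto hr ?_
      filter_upwards [self_mem_nhdsWithin] with x hx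
      obtain ⟨y, hy, hyx⟩ := exists_lt_of_csInf_lt hne hx
      exact le_trans (show gPhi z ≤ cdf (gam.map k) y from hy) (monotone_cdf _ hyx.le)
    exact h2.trans (monotone_cdf _ h)
  · intro h
    exact csInf_le hbd h

lemma quant_mono {k : ℝ → ℝ} (hk : Measurable k) : Monotone (quant k) := fun z w h => by
  rw [quant_le_iff hk]
  exact (gPhi_strictMono.monotone h).trans ((quant_le_iff hk).1 le_rfl)

lemma quant_map {k : ℝ → ℝ} (hk : Measurable k) : gam.map (quant k) = gam.map k := by
  have : IsProbabilityMeasure (gam.map k) := Measure.isProbabilityMeasure_map hk.aemeasurable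
  have hq := (quant_mono hk).measurable
  have : IsProbabilityMeasure (gam.map (quant k)) :=
    Measure.isProbabilityMeasure_map hq.aemeasurable
  refine Measure.ext_of_Iic _ _ fun τ => ?_
  rw [← measureReal_eq_measureReal_iff, map_measureReal_apply hq measurableSet_Iic,
    map_measureReal_apply hk measurableSet_Iic]
  have : quant k ⁻¹' Iic τ = {z | gPhi z ≤ gam.real (k ⁻¹' Iic τ)} := by
    ext z; exact quant_le_iff hk
  rw [this, gam_gPhi_le measureReal_nonneg measureReal_le_one]

/-- Gaussian (Ehrhard) rearrangement in the direction of the `j`-th coordinate -/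
noncomputable def symj {N : ℕ} (j : Fin N) (g : (Fin N → ℝ) → ℝ) (x : Fin N → ℝ) : ℝ :=
  quant (fun s => g (Function.update x j s)) (x j)

lemma symj_update {N : ℕ} (j : Fin N) (g : (Fin N → ℝ) → ℝ) (x : Fin N → ℝ) (z : ℝ) :
    symj j g (Function.update x j z) = quant (fun s => g (Function.update x j s)) z := by
  simp [symj]

lemma slice_cont {N : ℕ} (j : Fin N) {g : (Fin N → ℝ) → ℝ} (hg : Continuous g) (x : Fin N → ℝ) :
    Continuous fun s => g (Function.update x j s) :=
  hg.comp (continuous_const.update j continuous_id)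

lemma update_comb {N : ℕ} (j : Fin N) (x y : Fin N → ℝ) (a b s r : ℝ) :
    Function.update (a • x + b • y) j (a * s + b * r)
      = a • Function.update x j s + b • Function.update y j r := by
  ext i
  by_cases h : i = j
  · subst h; simp
  · simp [Function.update_of_ne h]

lemma symj_convex {N : ℕ} (j : Fin N) {g : (Fin N → ℝ) → ℝ} (hc : Continuous g)
    (hg : ConvexOn ℝ univ g) : ConvexOn ℝ univ (symj j g) := by
  refine ⟨convex_univ, fun x _ y _ a b ha hb hab => ?_⟩
  have ea : a = 1 - b := by linarith
  have hset : ∀ (x : Fin N → ℝ) (τ : ℝ), Convex ℝ {s | g (Function.update x j s) ≤ τ} := by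
    intro x τ s hs r hr c d hc' hd hcd
    simp only [mem_ofPred_eq, smul_eq_mul] at *
    have e : x = c • x + d • x := by rw [← add_smul, hcd, one_smul]
    have := hg.2 (mem_univ (Function.update x j s)) (mem_univ (Function.update x j r)) hc' hd hcd
    rw [← update_comb, ← e] at this
    simp only [smul_eq_mul] at this
    have e2 : τ = c * τ + d * τ := by rw [← add_mul, hcd, one_mul]
    rw [e2]
    exact this.trans (add_le_add (mul_le_mul_of_nonneg_left hs hc')
      (mul_le_mul_of_nonneg_left hr hd))
  have hmeas : ∀ (x : Fin N → ℝ) (τ : ℝ), MeasurableSet {s | g (Function.update x j s) ≤ τ} :=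
    fun x τ => measurableSet_le (slice_cont j hc x).measurable measurable_const
  have hx : gPhi (x j) ≤ gam.real {s | g (Function.update x j s) ≤ symj j g x} :=
    (quant_le_iff (slice_cont j hc x).measurable).1 le_rfl
  have hy : gPhi (y j) ≤ gam.real {s | g (Function.update y j s) ≤ symj j g y} :=
    (quant_le_iff (slice_cont j hc y).measurable).1 le_rfl
  have := ehrhard_one (hset x _) (hset y _) (hmeas x _) (hmeas y _) hb (by linarith)
    (C := {s | g (Function.update (a • x + b • y) j s) ≤ a • symj j g x + b • symj j g y})
    (by
      intro s hs r hr
      simp only [mem_ofPred_eq, smul_eq_mul] at *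
      rw [← ea, update_comb]
      refine (hg.2 (mem_univ _) (mem_univ _) ha hb hab).trans ?_
      simp only [smul_eq_mul]
      gcongr) hx hy
  refine (quant_le_iff (slice_cont j hc _).measurable).2 ?_
  rw [← ea] at this
  simpa using this

lemma convex_lip {N : ℕ} {C L : ℝ} (hL : 0 ≤ L) {g : (Fin N → ℝ) → ℝ} (hg : ConvexOn ℝ univ g)
    (h : ∀ x, g x ≤ C + L * nrm x) (x y : Fin N → ℝ) : |g x - g y| ≤ L * nrm (x - y) := by
  have key : ∀ x y : Fin N → ℝ, g y - g x ≤ L * nrm (y - x) := by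
    intro x y
    by_contra hcon
    push Not at hcon
    set D := g y - g x - L * nrm (y - x) with hD
    have hD0 : 0 < D := by linarith
    have hb : ∀ t : ℝ, 1 ≤ t → t * D ≤ C + L * nrm x - g x := by
      intro t ht
      have t0 : 0 < t := by linarith
      have e : y = (1 - 1 / t) • x + (1 / t) • (x + t • (y - x)) := by
        ext i; simp; field_simp; ring
      have h1 := hg.2 (mem_univ x) (mem_univ (x + t • (y - x)))
        (show 0 ≤ 1 - 1 / t by rw [sub_nonneg, div_le_one t0]; exact ht)
        (show 0 ≤ 1 / t by positivity) (by ring)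
      rw [← e] at h1
      simp only [smul_eq_mul] at h1
      have h2 := h (x + t • (y - x))
      have h3 := nrm_add_le x (t • (y - x))
      rw [nrm_smul, abs_of_pos t0] at h3
      have h4 : t * g y ≤ (t - 1) * g x + g (x + t • (y - x)) := by
        calc t * g y ≤ t * ((1 - 1 / t) * g x + 1 / t * g (x + t • (y - x))) :=
              mul_le_mul_of_nonneg_left h1 t0.le
          _ = _ := by field_simp
      have h5 := mul_le_mul_of_nonneg_left h3 hL
      rw [hD]; nlinarith
    obtain ⟨n, hn⟩ := exists_nat_gt ((C + L * nrm x - g x) / D)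
    rw [div_lt_iff₀ hD0] at hn
    have := hb (n + 1) (by linarith [Nat.cast_nonneg (α := ℝ) n])
    nlinarith
  rw [abs_le]
  have h1 := key x y
  have h2 := key y x
  rw [← nrm_neg, neg_sub] at h1
  constructor <;> linarith

lemma symj_cl {N : ℕ} {L : ℝ} (hL : 0 ≤ L) (j : Fin N) {g : (Fin N → ℝ) → ℝ} (hg : Cl L g) :
    Cl L (symj j g) := by
  have hc := symj_convex j hg.cont hg.conv
  refine ⟨hc, convex_lip (C := |g 0| + L * 2) hL hc fun x => ?_⟩
  refine (quant_le_iff (slice_cont j hg.cont x).measurable).2 ?_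
  refine (gam_symm_Icc (x j)).trans (measureReal_mono ?_)
  intro s hs
  have hs' : |s| ≤ |x j| + 2 := abs_le.2 hs
  have h1 : nrm (Function.update x j s) ≤ nrm x + 2 := by
    unfold nrm
    rw [Real.sqrt_le_left (by positivity)]
    change _ ≤ (nrm x + 2) ^ 2
    have e1 : ∑ i, Function.update x j s i ^ 2 = s ^ 2 + ∑ i ∈ Finset.univ.erase j, x i ^ 2 := by
      rw [← Finset.add_sum_erase _ _ (Finset.mem_univ j), Function.update_self]
      congr 1
      refine Finset.sum_congr rfl fun i hi => ?_
      rw [Function.update_of_ne (Finset.ne_of_mem_erase hi)]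
    have e2 : nrm x ^ 2 = x j ^ 2 + ∑ i ∈ Finset.univ.erase j, x i ^ 2 := by
      rw [nrm_sq, ← Finset.add_sum_erase _ _ (Finset.mem_univ j)]
    have e3 : s ^ 2 ≤ (|x j| + 2) ^ 2 := by
      rw [← sq_abs s]; exact pow_le_pow_left₀ (abs_nonneg s) hs' 2
    have e4 := abs_le_nrm x j
    have e5 := sq_abs (x j)
    rw [e1]; nlinarith
  have h2 := hg.growth (Function.update x j s)
  have h3 := mul_le_mul_of_nonneg_left h1 hL
  show g (Function.update x j s) ≤ _
  linarith [le_abs_self (g (Function.update x j s))]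

lemma symj_map {N : ℕ} {L : ℝ} (hL : 0 ≤ L) (j : Fin N) {g : (Fin N → ℝ) → ℝ} (hg : Cl L g) :
    (muN N).map (symj j g) = (muN N).map g := by
  have hs := (symj_cl hL j hg).cont.measurable
  have hm := hg.cont.measurable
  ext S hS
  rw [Measure.map_apply hs hS, Measure.map_apply hm hS,
    ← (mp_update j).measure_preimage (hs hS).nullMeasurableSet,
    ← (mp_update j).measure_preimage (hm hS).nullMeasurableSet,
    Measure.prod_apply ((mp_update j).measurable (hs hS)),
    Measure.prod_apply ((mp_update j).measurable (hm hS))]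
  refine lintegral_congr fun x => ?_
  have hk := (slice_cont j hg.cont x).measurable
  have e1 : Prod.mk x ⁻¹' ((fun p : (Fin N → ℝ) × ℝ => Function.update p.1 j p.2) ⁻¹' (symj j g ⁻¹' S))
      = quant (fun s => g (Function.update x j s)) ⁻¹' S := by
    ext z; simp only [mem_preimage, symj_update]
  have e2 : Prod.mk x ⁻¹' ((fun p : (Fin N → ℝ) × ℝ => Function.update p.1 j p.2) ⁻¹' (g ⁻¹' S))
      = (fun s => g (Function.update x j s)) ⁻¹' S := rfl
  rw [e1, e2, ← Measure.map_apply (quant_mono hk).measurable hS, quant_map hk,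
    Measure.map_apply hk hS]

lemma symj_integral_ne {N : ℕ} {L : ℝ} (hL : 0 ≤ L) {i j : Fin N} (hij : i ≠ j)
    {g : (Fin N → ℝ) → ℝ} (hg : Cl L g) :
    ∫ x, symj j g x * x i ∂(muN N) = ∫ x, g x * x i ∂(muN N) := by
  have hS := symj_cl hL j hg
  have key : ∀ h : (Fin N → ℝ) → ℝ, Cl L h → ∫ x, h x * x i ∂(muN N)
      = ∫ x, (∫ z, h (Function.update x j z) ∂gam) * x i ∂(muN N) := by
    intro h hh
    have hi := (mp_update j).integrable_comp_of_integrable (hh.integrable_mul i)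
    simp only [Function.comp_def] at hi
    rw [integral_update j (hh.integrable_mul i).aestronglyMeasurable, integral_prod _ hi]
    refine integral_congr_ae (ae_of_all _ fun x => ?_)
    simp only [Function.update_of_ne hij]
    exact integral_mul_const _ _
  rw [key _ hS, key _ hg]
  refine integral_congr_ae (ae_of_all _ fun x => ?_)
  have hk := (slice_cont j hg.cont x).measurable
  have hq := (quant_mono hk).measurable
  simp only [symj_update]
  congr 1
  have e1 : ∫ z, quant (fun s => g (Function.update x j s)) z ∂gam
      = ∫ y, y ∂(gam.map (quant (fun s => g (Function.update x j s)))) :=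
    (integral_map hq.aemeasurable aestronglyMeasurable_id).symm
  have e2 : ∫ z, g (Function.update x j z) ∂gam
      = ∫ y, y ∂(gam.map (fun s => g (Function.update x j s))) :=
    (integral_map hk.aemeasurable aestronglyMeasurable_id).symm
  rw [e1, e2, quant_map hk]

instance gam_openPos : gam.IsOpenPosMeasure :=
  (gaussianReal_absolutelyContinuous' 0 (by norm_num)).isOpenPosMeasure

lemma symj_const {N : ℕ} {L : ℝ} (hL : 0 ≤ L) (j : Fin N)
    {g : (Fin N → ℝ) → ℝ} (hg : Cl L g) (h0 : ∫ x, symj j g x * x j ∂(muN N) ≤ 0)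
    (x : Fin N → ℝ) (s : ℝ) : g (Function.update x j s) = g (Function.update x j 0) := by
  have hS := symj_cl hL j hg
  set G : (Fin N → ℝ) × ℝ → ℝ := fun p =>
    (symj j g (Function.update p.1 j p.2) - symj j g (Function.update p.1 j 0)) * p.2 with hG
  have cupd : Continuous fun p : (Fin N → ℝ) × ℝ => Function.update p.1 j p.2 :=
    continuous_fst.update j continuous_snd
  have cupd0 : Continuous fun x : Fin N → ℝ => Function.update x j 0 :=
    continuous_id.update j continuous_const
  have cG : Continuous G := ((hS.cont.comp cupd).sub
    (hS.cont.comp (cupd0.comp continuous_fst))).mul continuous_snd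
  have i1 : Integrable (fun p : (Fin N → ℝ) × ℝ => symj j g (Function.update p.1 j p.2) * p.2)
      ((muN N).prod gam) := by
    have := (mp_update j).integrable_comp_of_integrable (hS.integrable_mul j)
    simpa [Function.comp_def] using this
  have i2' : Integrable (fun x => symj j g (Function.update x j 0)) (muN N) := by
    refine (memLp_growth (C := |symj j g 0|) (L := L) (hS.cont.comp cupd0) fun x => ?_).integrable
      (by norm_num)
    refine (hS.growth _).trans ?_
    have : nrm (Function.update x j 0) ≤ nrm x := by
      unfold nrm
      refine Real.sqrt_le_sqrt (Finset.sum_le_sum fun i _ => ?_)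
      by_cases h : i = j
      · subst h; simp [sq_nonneg]
      · simp [Function.update_of_ne h]
    nlinarith
  have iid : Integrable (fun z : ℝ => z) gam :=
    (memLp_id_gaussianReal (μ := 0) (v := 1) 1).integrable le_rfl
  have i2 : Integrable (fun p : (Fin N → ℝ) × ℝ => symj j g (Function.update p.1 j 0) * p.2)
      ((muN N).prod gam) := i2'.mul_prod iid
  have z2 : ∫ p : (Fin N → ℝ) × ℝ, symj j g (Function.update p.1 j 0) * p.2 ∂((muN N).prod gam) = 0 := by
    rw [integral_prod_mul (fun x => symj j g (Function.update x j 0)) (fun z : ℝ => z),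
      integral_id_gaussianReal, mul_zero]
  have e1 : ∫ x, symj j g x * x j ∂(muN N)
      = ∫ p : (Fin N → ℝ) × ℝ, symj j g (Function.update p.1 j p.2) * p.2 ∂((muN N).prod gam) := by
    rw [integral_update j (hS.integrable_mul j).aestronglyMeasurable]
    simp
  have iG : Integrable G ((muN N).prod gam) := by
    refine (i1.sub i2).congr (ae_of_all _ fun p => ?_)
    simp only [hG, Pi.sub_apply]; ring
  have eG : ∫ p, G p ∂((muN N).prod gam) ≤ 0 := by
    have : ∫ p, G p ∂((muN N).prod gam) = (∫ p : (Fin N → ℝ) × ℝ, symj j g (Function.update p.1 j p.2) * p.2 ∂((muN N).prod gam))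
        - ∫ p : (Fin N → ℝ) × ℝ, symj j g (Function.update p.1 j 0) * p.2 ∂((muN N).prod gam) := by
      rw [← integral_sub i1 i2]
      refine integral_congr_ae (ae_of_all _ fun p => ?_)
      simp only [hG]; ring
    rw [this, z2, ← e1]; linarith
  have G0 : ∀ p, 0 ≤ G p := by
    rintro ⟨x, z⟩
    simp only [hG, symj_update]
    have hk := (slice_cont j hg.cont x).measurable
    rcases le_total 0 z with hz | hz
    · exact mul_nonneg (sub_nonneg.2 (quant_mono hk hz)) hz
    · exact mul_nonneg_of_nonpos_of_nonpos (sub_nonpos.2 (quant_mono hk hz)) hz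
  have Gz : G =ᵐ[(muN N).prod gam] 0 :=
    (integral_eq_zero_iff_of_nonneg G0 iG).1 (le_antisymm eG (integral_nonneg G0))
  have Gz' : G = 0 := (Continuous.ae_eq_iff_eq _ cG continuous_zero).1 Gz
  have hk := (slice_cont j hg.cont x)
  set k := fun s => g (Function.update x j s) with hkdef
  have qc : ∀ z, quant k z = quant k 0 := by
    intro z
    by_cases hz : z = 0
    · rw [hz]
    have := congrFun Gz' (x, z)
    simp only [hG, symj_update, Pi.zero_apply, mul_eq_zero, hz, or_false] at this
    exact sub_eq_zero.1 this
  have hmap := quant_map hk.measurable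
  rw [show quant k = fun _ => quant k 0 from funext qc, Measure.map_const] at hmap
  have ae1 : ∀ᵐ s ∂gam, k s = quant k 0 := by
    have h3 : (gam.map k) {quant k 0}ᶜ = 0 := by rw [← hmap]; simp
    rw [Measure.map_apply hk.measurable (measurableSet_singleton _).compl] at h3
    rw [ae_iff]; exact h3
  have : k = fun _ => quant k 0 := (Continuous.ae_eq_iff_eq gam hk continuous_const).1 ae1
  show k s = k 0
  rw [this]

lemma rot_improve {N : ℕ} {L : ℝ} {i j : Fin N} (hij : i ≠ j)
    {g : (Fin N → ℝ) → ℝ} (hg : Cl L g) (hB : 0 < ∫ x, g x * x j ∂(muN N)) :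
    ∃ h, Cl L h ∧ (muN N).map h = (muN N).map g ∧
      ∫ x, g x * x i ∂(muN N) < ∫ x, h x * x i ∂(muN N) := by
  set M := ∫ x, g x * x i ∂(muN N) with hM
  set B := ∫ x, g x * x j ∂(muN N) with hBdef
  set r := √(M ^ 2 + B ^ 2) with hr
  have hr2 : r ^ 2 = M ^ 2 + B ^ 2 := Real.sq_sqrt (by positivity)
  have hr0 : 0 < r := Real.sqrt_pos.2 (by positivity)
  have hMr : M < r := lt_of_pow_lt_pow_left₀ 2 hr0.le (by rw [hr2]; nlinarith)
  set e : EuclideanSpace ℝ (Fin N) := EuclideanSpace.single i 1 with he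
  set v : EuclideanSpace ℝ (Fin N) :=
    WithLp.toLp 2 (fun k => if k = i then M / r else if k = j then B / r else 0) with hv
  have hsum : ∀ w : Fin N → ℝ, ∑ k, (if k = i then M / r else if k = j then B / r else 0) * w k
      = M / r * w i + B / r * w j := by
    intro w
    have : ∀ k, (if k = i then M / r else if k = j then B / r else 0) * w k
        = (if k = i then M / r * w k else 0) + (if k = j then B / r * w k else 0) := by
      intro k
      by_cases h1 : k = i
      · have h2 : k ≠ j := h1 ▸ hij
        simp only [h1, hij, if_true, if_false, add_zero]
      · by_cases h2 : k = j
        · rw [if_neg h1, if_neg h1, if_pos h2, if_pos h2, zero_add]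
        · rw [if_neg h1, if_neg h1, if_neg h2, if_neg h2, zero_add, zero_mul]
    rw [Finset.sum_congr rfl fun k _ => this k, Finset.sum_add_distrib]
    simp
  have hev : ‖e‖ = ‖v‖ := by
    have h1 : ‖e‖ = 1 := by simp [he]
    have h2 : ‖v‖ ^ 2 = 1 := by
      rw [EuclideanSpace.real_norm_sq_eq]
      have := hsum (fun k => if k = i then M / r else if k = j then B / r else 0)
      simp only [if_true, if_neg hij.symm] at this
      simp only [hv, pow_two]
      rw [this]
      field_simp
      rw [hr2]
    rw [h1]
    nlinarith [norm_nonneg v]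
  set R := Submodule.reflection (Submodule.span ℝ {e - v})ᗮ with hR
  have hRe : R e = v := Submodule.reflection_sub hev
  have hRR : ∀ x, R (R x) = x := Submodule.reflection_reflection _
  set T : (Fin N → ℝ) → (Fin N → ℝ) := fun x => WithLp.ofLp (R (WithLp.toLp 2 x)) with hT
  have cT : Continuous T := by
    simp only [hT]
    exact (PiLp.continuous_ofLp 2 _).comp (R.continuous.comp (PiLp.continuous_toLp 2 _))
  have hTT : ∀ x, T (T x) = x := fun x => by simp [hT, hRR]
  have hTi : ∀ x, T x i = M / r * x i + B / r * x j := by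
    intro x
    have h1 : T x i = inner ℝ e (R (WithLp.toLp 2 x)) := by
      simp [hT, he, EuclideanSpace.inner_single_left]
    have h2 : inner ℝ e (R (WithLp.toLp 2 x)) = inner ℝ v (WithLp.toLp 2 x) := by
      rw [← hRe, ← R.inner_map_map (R e), hRR]
    rw [h1, h2, ← hsum x]
    simp only [hv, PiLp.inner_apply]
    refine Finset.sum_congr rfl fun k _ => ?_
    simp [mul_comm]
  have mpT : MeasurePreserving T (muN N) (muN N) := by
    have h1 : MeasurePreserving (WithLp.toLp 2 : (Fin N → ℝ) → EuclideanSpace ℝ (Fin N)) (muN N)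
        (stdGaussian (EuclideanSpace ℝ (Fin N))) :=
      ⟨(PiLp.continuous_toLp 2 _).measurable, map_pi_eq_stdGaussian⟩
    have h2 : MeasurePreserving R (stdGaussian (EuclideanSpace ℝ (Fin N)))
        (stdGaussian (EuclideanSpace ℝ (Fin N))) := ⟨R.continuous.measurable, stdGaussian_map R⟩
    have h3 : MeasurePreserving (WithLp.ofLp : EuclideanSpace ℝ (Fin N) → (Fin N → ℝ))
        (stdGaussian (EuclideanSpace ℝ (Fin N))) (muN N) := by
      refine ⟨(PiLp.continuous_ofLp 2 _).measurable, ?_⟩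
      rw [← map_pi_eq_stdGaussian, Measure.map_map (PiLp.continuous_ofLp 2 _).measurable
        (PiLp.continuous_toLp 2 _).measurable]
      exact Measure.map_id
    exact h3.comp (h2.comp h1)
  have hTlin : ∀ (a b : ℝ) (x y : Fin N → ℝ), T (a • x + b • y) = a • T x + b • T y := by
    intro a b x y
    simp [hT, WithLp.toLp_add, WithLp.toLp_smul]
  have hTn : ∀ x y, nrm (T x - T y) = nrm (x - y) := by
    intro x y
    have : T x - T y = T (x - y) := by simp [hT, WithLp.toLp_sub]
    rw [this, nrm_eq, nrm_eq]
    exact R.norm_map _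
  refine ⟨g ∘ T, ⟨⟨convex_univ, fun x _ y _ a b ha hb hab => ?_⟩, fun x y => ?_⟩, ?_, ?_⟩
  · simp only [Function.comp, hTlin]
    exact hg.conv.2 (mem_univ _) (mem_univ _) ha hb hab
  · simp only [Function.comp]
    rw [← hTn]; exact hg.lip _ _
  · rw [← Measure.map_map hg.cont.measurable cT.measurable, mpT.map_eq]
  · have e1 : ∫ x, (g ∘ T) x * x i ∂(muN N) = ∫ y, g y * T y i ∂(muN N) := by
      have hc : Continuous fun y => g y * T y i :=
        hg.cont.mul ((continuous_apply i).comp cT)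
      conv_rhs => rw [← mpT.map_eq]
      rw [integral_map cT.measurable.aemeasurable hc.aestronglyMeasurable]
      simp [hTT]
    have e2 : ∫ y, g y * T y i ∂(muN N) = M / r * M + B / r * B := by
      rw [hM, hBdef, ← integral_const_mul, ← integral_const_mul, ← integral_add
        ((hg.integrable_mul i).const_mul _) ((hg.integrable_mul j).const_mul _)]
      refine integral_congr_ae (ae_of_all _ fun y => ?_)
      simp only [hTi]; ring
    have e3 : M / r * M + B / r * B = r := by
      field_simp; linarith
    rw [e1, e2, e3]; exact hMr

/-- Sequential compactness of pointwise bounded families of `L`-Lipschitz functions. -/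
lemma lip_subseq {N : ℕ} {L K : ℝ} (hL : 0 ≤ L) (g : ℕ → (Fin N → ℝ) → ℝ)
    (hg : ∀ n, Cl L (g n)) (hK : ∀ n, |g n 0| ≤ K) :
    ∃ (φ : ℕ → ℕ) (G : (Fin N → ℝ) → ℝ), StrictMono φ ∧
      ∀ x, Tendsto (fun n => g (φ n) x) atTop (𝓝 (G x)) := by
  set d : ℕ → (Fin N → ℝ) := TopologicalSpace.denseSeq (Fin N → ℝ) with hd
  have hcomp : IsCompact (Set.pi univ fun k : ℕ => Icc (-(K + L * nrm (d k))) (K + L * nrm (d k))) :=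
    isCompact_univ_pi fun k => isCompact_Icc
  obtain ⟨a, -, φ, hφ, ha⟩ := hcomp.tendsto_subseq (x := fun n k => g n (d k)) (fun n k _ => by
    exact abs_le.1 (((hg n).growth _).trans (by linarith [hK n])))
  rw [tendsto_pi_nhds] at ha
  have hc : ∀ x, ∃ y, Tendsto (fun n => g (φ n) x) atTop (𝓝 y) := by
    intro x
    refine cauchySeq_tendsto_of_complete (Metric.cauchySeq_iff'.2 fun ε hε => ?_)
    have hopen : IsOpen {y : Fin N → ℝ | L * nrm (x - y) < ε / 4} :=
      isOpen_lt (continuous_const.mul (nrm_cont.comp (continuous_const.sub continuous_id)))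
        continuous_const
    obtain ⟨y, hy, k, rfl⟩ := (TopologicalSpace.denseRange_denseSeq (Fin N → ℝ)).inter_open_nonempty _ hopen
      ⟨x, by simp [nrm_zero]; linarith⟩
    have hy' : L * nrm (x - d k) < ε / 4 := hy
    obtain ⟨n0, hn0⟩ := Metric.cauchySeq_iff'.1 (ha k).cauchySeq (ε / 4) (by linarith)
    refine ⟨n0, fun n hn => ?_⟩
    have h1 := hn0 n hn
    simp only [Function.comp, Real.dist_eq] at h1 ⊢
    have h2 := (hg (φ n)).lip x (d k)
    have h3 := (hg (φ n0)).lip x (d k)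
    rw [abs_lt] at h1 ⊢
    rw [abs_le] at h2 h3
    constructor <;> linarith [h1.1, h1.2, h2.1, h2.2, h3.1, h3.2]
  choose G hG using hc
  exact ⟨φ, G, hφ, hG⟩

lemma exists_max {N : ℕ} {L : ℝ} (hL : 0 ≤ L) (i : Fin N) {f : (Fin N → ℝ) → ℝ} (hf : Cl L f) :
    ∃ g, Cl L g ∧ (muN N).map g = (muN N).map f ∧
      ∀ h, Cl L h → (muN N).map h = (muN N).map f →
        ∫ x, h x * x i ∂(muN N) ≤ ∫ x, g x * x i ∂(muN N) := by
  set K := |∫ x, f x ∂(muN N)| + L * ∫ x, nrm x ∂(muN N) with hK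
  have inrm : Integrable (nrm : (Fin N → ℝ) → ℝ) (muN N) := memLp_nrm.integrable (by norm_num)
  have hmean : ∀ g, Cl L g → (muN N).map g = (muN N).map f →
      ∫ x, g x ∂(muN N) = ∫ x, f x ∂(muN N) := by
    intro g hg hm
    have e1 : ∫ x, g x ∂(muN N) = ∫ y, y ∂((muN N).map g) :=
      (integral_map hg.cont.measurable.aemeasurable aestronglyMeasurable_id).symm
    have e2 : ∫ x, f x ∂(muN N) = ∫ y, y ∂((muN N).map f) :=
      (integral_map hf.cont.measurable.aemeasurable aestronglyMeasurable_id).symm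
    rw [e1, e2, hm]
  have hg0 : ∀ g, Cl L g → (muN N).map g = (muN N).map f → |g 0| ≤ K := by
    intro g hg hm
    have h1 : |∫ x, (g x - g 0) ∂(muN N)| ≤ L * ∫ x, nrm x ∂(muN N) := by
      rw [← integral_const_mul]
      refine (abs_integral_le_integral_abs).trans ?_
      refine integral_mono (hg.integrable.sub (integrable_const _)).abs (inrm.const_mul L) fun x => ?_
      simpa using hg.lip x 0
    rw [integral_sub hg.integrable (integrable_const _), hmean g hg hm] at h1
    simp only [integral_const, probReal_univ, one_smul] at h1
    have h2 := abs_sub_abs_le_abs_sub (g 0) (∫ x, f x ∂(muN N))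
    rw [abs_sub_comm] at h2
    rw [hK]; linarith
  have ibd : Integrable (fun x : Fin N → ℝ => (K + L * nrm x) * |x i|) (muN N) :=
    ((memLp_const K).add (memLp_nrm.const_mul L)).integrable_mul (memLp_coord i).abs
  have bd : ∀ g, Cl L g → (muN N).map g = (muN N).map f → ∀ x : Fin N → ℝ,
      ‖g x * x i‖ ≤ (K + L * nrm x) * |x i| := by
    intro g hg hm x
    rw [norm_mul, Real.norm_eq_abs, Real.norm_eq_abs]
    refine mul_le_mul_of_nonneg_right ?_ (abs_nonneg _)
    linarith [hg.growth x, hg0 g hg hm]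
  set S : Set ℝ := {r | ∃ g, Cl L g ∧ (muN N).map g = (muN N).map f ∧
    ∫ x, g x * x i ∂(muN N) = r} with hS
  have Sne : S.Nonempty := ⟨_, f, hf, rfl, rfl⟩
  have Sbd : BddAbove S := by
    refine ⟨∫ x : Fin N → ℝ, (K + L * nrm x) * |x i| ∂(muN N), ?_⟩
    rintro r ⟨g, hg, hm, rfl⟩
    exact integral_mono (hg.integrable_mul i) ibd fun x =>
      (le_abs_self _).trans (bd g hg hm x)
  obtain ⟨u, -, hu, huS⟩ := exists_seq_tendsto_sSup Sne Sbd
  choose g hg hm hgu using huS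
  obtain ⟨φ, G, hφ, hG⟩ := lip_subseq hL g hg (fun n => hg0 _ (hg n) (hm n))
  have hGcl : Cl L G := by
    refine ⟨⟨convex_univ, fun x _ y _ a b ha hb hab => ?_⟩, fun x y => ?_⟩
    · exact le_of_tendsto_of_tendsto' (hG _) (((hG x).const_smul a).add ((hG y).const_smul b))
        fun n => (hg (φ n)).conv.2 (mem_univ _) (mem_univ _) ha hb hab
    · exact le_of_tendsto' ((hG x).sub (hG y)).abs fun n => (hg (φ n)).lip x y
  have hGm : (muN N).map G = (muN N).map f := by
    have : IsProbabilityMeasure ((muN N).map G) :=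
      Measure.isProbabilityMeasure_map hGcl.cont.measurable.aemeasurable
    have : IsProbabilityMeasure ((muN N).map f) :=
      Measure.isProbabilityMeasure_map hf.cont.measurable.aemeasurable
    refine ext_of_forall_integral_eq_of_IsFiniteMeasure fun ψ => ?_
    have e : ∀ h : (Fin N → ℝ) → ℝ, Cl L h →
        ∫ y, ψ y ∂((muN N).map h) = ∫ x, ψ (h x) ∂(muN N) := fun h hh =>
      integral_map hh.cont.measurable.aemeasurable ψ.continuous.aestronglyMeasurable
    have lim : Tendsto (fun n => ∫ x, ψ (g (φ n) x) ∂(muN N)) atTop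
        (𝓝 (∫ x, ψ (G x) ∂(muN N))) := by
      refine tendsto_integral_of_dominated_convergence (fun _ => ‖ψ‖)
        (fun n => (ψ.continuous.comp (hg (φ n)).cont).aestronglyMeasurable)
        (integrable_const _) (fun n => ae_of_all _ fun x => ψ.norm_coe_le_norm _)
        (ae_of_all _ fun x => (ψ.continuous.tendsto _).comp (hG x))
    have hcst : ∀ n, ∫ x, ψ (g (φ n) x) ∂(muN N) = ∫ y, ψ y ∂((muN N).map f) := fun n => by
      rw [← e _ (hg (φ n)), hm]
    simp only [hcst] at lim
    rw [e G hGcl]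
    exact tendsto_nhds_unique lim tendsto_const_nhds
  refine ⟨G, hGcl, hGm, fun h hh hhm => ?_⟩
  have lim : Tendsto (fun n => ∫ x, g (φ n) x * x i ∂(muN N)) atTop
      (𝓝 (∫ x, G x * x i ∂(muN N))) :=
    tendsto_integral_of_dominated_convergence (fun x => (K + L * nrm x) * |x i|)
      (fun n => ((hg (φ n)).integrable_mul i).aestronglyMeasurable) ibd
      (fun n => ae_of_all _ fun x => bd _ (hg _) (hm _) x)
      (ae_of_all _ fun x => (hG x).mul_const _)
  simp only [hgu] at lim
  have := tendsto_nhds_unique lim (hu.comp hφ.tendsto_atTop)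
  rw [this]
  exact le_csSup Sbd ⟨h, hh, hhm, rfl⟩

/-- A convex Lipschitz function of a Gaussian vector has the law of a nondecreasing convex
Lipschitz function of one Gaussian variable. -/
lemma exists_one_dim {N : ℕ} {L : ℝ} (hL : 0 ≤ L) (i : Fin N) {f : (Fin N → ℝ) → ℝ} (hf : Cl L f) :
    ∃ q : ℝ → ℝ, Monotone q ∧ ConvexOn ℝ univ q ∧ (∀ z w, |q z - q w| ≤ L * |z - w|) ∧
      gam.map q = (muN N).map f := by
  obtain ⟨g, hg, hgm, hmax⟩ := exists_max hL i hf
  have hconst : ∀ j, j ≠ i → ∀ x s, g (Function.update x j s) = g (Function.update x j 0) := by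
    intro j hj
    refine symj_const hL j hg ?_
    by_contra hcon
    push Not at hcon
    obtain ⟨h, hh, hhm, hlt⟩ := rot_improve hj.symm (symj_cl hL j hg) hcon
    rw [symj_integral_ne hL hj.symm hg] at hlt
    exact absurd (hmax h hh (hhm.trans ((symj_map hL j hg).trans hgm))) (not_le.2 hlt)
  have hred : ∀ (s : Finset (Fin N)), i ∉ s → ∀ x, g x = g (fun k => if k ∈ s then 0 else x k) := by
    intro s
    induction s using Finset.induction_on with
    | empty => intro _ x; simp
    | insert j s hjs ih =>
      intro hi x
      have hj : j ≠ i := fun h => hi (by simp [h])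
      rw [ih (fun h => hi (Finset.mem_insert_of_mem h)) x]
      have e1 : (fun k => if k ∈ insert j s then 0 else x k)
          = Function.update (fun k => if k ∈ s then 0 else x k) j 0 := by
        ext k
        by_cases hk : k = j
        · subst hk; simp
        · simp [Function.update_of_ne hk, hk]
      rw [e1, ← hconst j hj _ ((fun k => if k ∈ s then 0 else x k) j), Function.update_eq_self]
  set k : ℝ → ℝ := fun s => g (Function.update 0 i s) with hk
  have hgk : ∀ x s, g (Function.update x i s) = k s := by
    intro x s
    rw [hred (Finset.univ.erase i) (by simp) (Function.update x i s)]
    simp only [hk]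
    congr 1
    ext l
    by_cases hl : l = i
    · subst hl; simp
    · simp [Function.update_of_ne hl, hl]
  have hG := symj_cl hL i hg
  have hGq : ∀ x, symj i g x = quant k (x i) := by
    intro x; simp only [symj, hgk]
  have hq : ∀ z, quant k z = symj i g (Function.update 0 i z) := fun z => by
    rw [hGq]; simp
  have kc : Continuous k := slice_cont i hg.cont 0
  refine ⟨quant k, quant_mono kc.measurable, ⟨convex_univ, fun z _ w _ a b ha hb hab => ?_⟩,
    fun z w => ?_, ?_⟩
  · have e : (0 : Fin N → ℝ) = a • 0 + b • 0 := by simp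
    rw [hq, hq z, hq w, smul_eq_mul, smul_eq_mul]
    conv_lhs => rw [e, update_comb]
    exact hG.conv.2 (mem_univ _) (mem_univ _) ha hb hab
  · have h1 := hG.lip (Function.update 0 i z) (Function.update 0 i w)
    rw [← hq, ← hq] at h1
    have e : nrm (Function.update (0 : Fin N → ℝ) i z - Function.update (0 : Fin N → ℝ) i w) = |z - w| := by
      unfold nrm
      rw [← Real.sqrt_sq_eq_abs]
      congr 1
      rw [Finset.sum_eq_single i]
      · simp
      · intro l _ hl; simp [Function.update_of_ne hl]
      · simp
    rwa [e] at h1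
  · rw [← hgm, ← symj_map hL i hg, show symj i g = quant k ∘ (fun x => x i) from funext hGq,
      ← Measure.map_map (quant_mono kc.measurable).measurable (measurable_pi_apply i)]
    rw [(measurePreserving_eval (fun _ : Fin N => gaussianReal 0 1) i).map_eq]

theorem stmt12 (N : ℕ) (hN : 1 ≤ N) (f : (Fin N → ℝ) → ℝ) (L : ℝ) (hL : 0 < L)
    (hconv : ConvexOn ℝ Set.univ f)
    (hlip : ∀ x y : Fin N → ℝ,
      |f x - f y| ≤ L * Real.sqrt (∑ i, (x i - y i) ^ 2))
    (ε : ℝ) (hε : 0 < ε) :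
    (Measure.pi fun _ : Fin N => gaussianReal 0 1)
        {x | (∫ y, f y ∂(Measure.pi fun _ : Fin N => gaussianReal 0 1)) + ε < f x}
      ≤ ENNReal.ofReal ((1 / 2) * Real.exp (-ε ^ 2 / (2 * L ^ 2))) := by
  have hf : Cl L f := ⟨hconv, fun x y => by simpa [nrm] using hlip x y⟩
  obtain ⟨q, qm, qc, ql, qlaw⟩ := exists_one_dim hL.le ⟨0, hN⟩ hf
  have qcont : Continuous q := by
    refine (LipschitzWith.of_dist_le_mul (K := ⟨L, hL.le⟩) fun z w => ?_).continuous
    rw [Real.dist_eq, Real.dist_eq]; exact ql z w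
  have iid : Integrable (fun z : ℝ => z) gam :=
    (memLp_id_gaussianReal (μ := 0) (v := 1) 1).integrable le_rfl
  have fm := hf.cont.measurable
  have iq : Integrable q gam := by
    have h1 : Integrable (fun y : ℝ => y) ((muN N).map f) :=
      (integrable_map_measure aestronglyMeasurable_id fm.aemeasurable).2 hf.integrable
    rw [← qlaw] at h1
    exact (integrable_map_measure aestronglyMeasurable_id qcont.measurable.aemeasurable).1 h1
  have hmean : ∫ y, f y ∂(muN N) = ∫ z, q z ∂gam := by
    have e1 : ∫ x, f x ∂(muN N) = ∫ y, y ∂((muN N).map f) :=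
      (integral_map fm.aemeasurable aestronglyMeasurable_id).symm
    have e2 : ∫ z, q z ∂gam = ∫ y, y ∂(gam.map q) :=
      (integral_map qcont.measurable.aemeasurable aestronglyMeasurable_id).symm
    rw [e1, e2, qlaw]
  have jensen : q 0 ≤ ∫ z, q z ∂gam := by
    have := qc.map_integral_le (μ := gam) (f := fun z : ℝ => z) qcont.continuousOn isClosed_univ
      (ae_of_all _ fun _ => mem_univ _) iid iq
    rwa [integral_id_gaussianReal] at this
  set c := (∫ y, f y ∂(muN N)) + ε with hc
  have e1 : (muN N) {x | c < f x} = gam (q ⁻¹' Ioi c) := by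
    rw [← Measure.map_apply qcont.measurable measurableSet_Ioi, qlaw,
      Measure.map_apply fm measurableSet_Ioi]
    rfl
  have e2 : q ⁻¹' Ioi c ⊆ (Iic (ε / L))ᶜ := by
    intro z hz hz2
    have hz1 : c < q z := hz
    have hz3 : z ≤ ε / L := hz2
    have h1 : q z ≤ q (ε / L) := qm hz3
    have h2 := (abs_le.1 (ql (ε / L) 0)).2
    rw [sub_zero, abs_of_pos (by positivity), mul_div_cancel₀ _ hL.ne'] at h2
    linarith
  show (muN N) {x | c < f x} ≤ _
  rw [e1]
  refine (measure_mono e2).trans ?_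
  rw [← ofReal_measureReal (μ := gam)]
  refine ENNReal.ofReal_le_ofReal ?_
  rw [probReal_compl_eq_one_sub measurableSet_Iic]
  refine (gPhi_tail (c := ε / L) (by positivity)).trans (le_of_eq ?_)
  congr 2
  field_simp
end
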